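/- arXiv:2410.18259 — 2 statements merged into one kernel-verified Lean document; each statement's English description precedes it below -/
import Mathlib

section
/- For every ε > 0 there exists a constant C > 0 such that for all real x ≥ 16, the number of positive integers n ≤ x whose largest prime factor P(n) repeats (i.e., P(n)² divides n, with n ≥ 2) is at most C · x · exp(−(1/2 − ε)·√(log x · log log x)). -/
open Finset Real

/-- The largest prime factor of `n` (junk value `0` for `n ≤ 1`). -/
def maxPrimeFac (n : ℕ) : ℕ := n.primeFactors.sup _root_.id

/-- Chebyshev on a dyadic block. -/
lemma dyadic_block (k : ℕ) (hk : 1 ≤ k) :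
    ∑ p ∈ (Finset.Ico (2^k) (2^(k+1))).filter Nat.Prime, (1/(p:ℝ)) ≤ 4/(k:ℝ) := by
  have hk0 : (0:ℝ) < k := by exact_mod_cast hk
  have h2 : (0:ℝ) < Real.log 2 := Real.log_pos (by norm_num)
  have hth : ∑ p ∈ (Finset.Ico (2^k) (2^(k+1))).filter Nat.Prime, Real.log p
      ≤ 2 * Real.log 2 * 2^(k+1) := by
    calc _ ≤ ∑ p ∈ Nat.primesLE (2^(k+1)), Real.log p := by
          apply Finset.sum_le_sum_of_subset_of_nonneg
          · intro p hp
            simp only [Finset.mem_filter, Finset.mem_Ico] at hp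
            rw [Nat.mem_primesLE]
            exact ⟨hp.1.2.le, hp.2⟩
          · intro i _ _
            exact Real.log_natCast_nonneg i
      _ = Chebyshev.theta ((2^(k+1) : ℕ) : ℝ) := (Chebyshev.theta_eq_sum_primesLE_log _).symm
      _ ≤ Real.log 4 * ((2^(k+1) : ℕ) : ℝ) := Chebyshev.theta_le_log4_mul_x (by positivity)
      _ = _ := by
          rw [show (4:ℝ) = 2^2 by norm_num, Real.log_pow]; push_cast; ring
  have hpt : ∀ p ∈ (Finset.Ico (2^k) (2^(k+1))).filter Nat.Prime,
      (1/(p:ℝ)) ≤ Real.log p / (2^k * (k * Real.log 2)) := by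
    intro p hp
    simp only [Finset.mem_filter, Finset.mem_Ico] at hp
    have h1 : ((2:ℝ)^k) ≤ p := by exact_mod_cast hp.1.1
    have h3 : (k:ℝ) * Real.log 2 ≤ Real.log p := by
      rw [← Real.log_pow]; exact Real.log_le_log (by positivity) h1
    have hp0 : (0:ℝ) < p := lt_of_lt_of_le (by positivity) h1
    rw [div_le_div_iff₀ hp0 (by positivity)]
    rw [one_mul, mul_comm]
    exact mul_le_mul h3 h1 (by positivity) (le_trans (by positivity) h3)
  refine (Finset.sum_le_sum hpt).trans ?_
  rw [← Finset.sum_div, div_le_div_iff₀ (by positivity) hk0]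
  calc _ ≤ 2 * Real.log 2 * 2^(k+1) * k := by gcongr
    _ = _ := by ring

lemma sum_inv_primes_dyadic (k : ℕ) :
    ∑ p ∈ Nat.primesBelow (2^(k+1)), (1/(p:ℝ)) ≤ 4 * (harmonic k : ℝ) := by
  induction k with
  | zero => simp
  | succ k ih =>
    have hs : Nat.primesBelow (2^(k+1+1)) ⊆ Nat.primesBelow (2^(k+1)) ∪
        (Finset.Ico (2^(k+1)) (2^(k+1+1))).filter Nat.Prime := by
      intro p hp
      rw [Nat.mem_primesBelow] at hp
      simp only [Finset.mem_union, Nat.mem_primesBelow, Finset.mem_filter, Finset.mem_Ico]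
      rcases lt_or_ge p (2^(k+1)) with h | h
      · exact Or.inl ⟨h, hp.2⟩
      · exact Or.inr ⟨⟨h, hp.1⟩, hp.2⟩
    have hd := dyadic_block (k+1) (by omega)
    rw [harmonic_succ]
    push_cast at hd ⊢
    have e : 4 / ((k:ℝ)+1) = 4 * ((k:ℝ)+1)⁻¹ := by ring
    rw [mul_add]
    refine (Finset.sum_le_sum_of_subset_of_nonneg hs (fun i _ _ => by positivity)).trans ?_
    have hu := Finset.sum_union_inter (s₁ := Nat.primesBelow (2^(k+1)))
      (s₂ := (Finset.Ico (2^(k+1)) (2^(k+1+1))).filter Nat.Prime) (f := fun p : ℕ => (1/(p:ℝ)))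
    have hi : 0 ≤ ∑ p ∈ Nat.primesBelow (2^(k+1)) ∩
      (Finset.Ico (2^(k+1)) (2^(k+1+1))).filter Nat.Prime, (1/(p:ℝ)) :=
      Finset.sum_nonneg (fun i _ => by positivity)
    linarith

lemma sum_inv_primes (k N : ℕ) (h : N ≤ 2^(k+1)) :
    ∑ p ∈ Nat.primesBelow N, (1/(p:ℝ)) ≤ 4 * (1 + Real.log k) := by
  refine le_trans (Finset.sum_le_sum_of_subset_of_nonneg ?_ (fun i _ _ => by positivity))
    ((sum_inv_primes_dyadic k).trans ?_)
  · intro p hp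
    rw [Nat.mem_primesBelow] at hp ⊢
    exact ⟨hp.1.trans_le h, hp.2⟩
  · have := harmonic_le_one_add_log k
    linarith

/-- completely multiplicative power function -/
noncomputable def powHom (σ : ℝ) : ℕ →* ℝ where
  toFun n := (n:ℝ)^(-σ)
  map_one' := by simp
  map_mul' a b := by
    push_cast
    exact Real.mul_rpow (Nat.cast_nonneg a) (Nat.cast_nonneg b)

lemma prime_rpow_le (σ : ℝ) (hσ : 1/2 ≤ σ) (p : ℕ) (hp : p.Prime) : (p:ℝ)^(-σ) ≤ 3/4 := by
  have h2 : (2:ℝ) ≤ p := by exact_mod_cast hp.two_le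
  calc (p:ℝ)^(-σ) ≤ (p:ℝ)^(-(1/2:ℝ)) :=
        Real.rpow_le_rpow_of_exponent_le (by linarith) (by linarith)
    _ ≤ (2:ℝ)^(-(1/2:ℝ)) := Real.rpow_le_rpow_of_nonpos (by norm_num) h2 (by norm_num)
    _ ≤ 3/4 := by
        rw [Real.rpow_neg (by norm_num), ← Real.sqrt_eq_rpow]
        rw [inv_le_comm₀ (by positivity) (by norm_num)]
        apply Real.le_sqrt_of_sq_le; norm_num

lemma rankin (x σ : ℝ) (hx : 1 ≤ x) (hσ : 1/2 ≤ σ) (N : ℕ) (B : Finset ℕ)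
    (hB : ∀ n ∈ B, n ∈ Nat.smoothNumbers N ∧ (n:ℝ) ≤ x) :
    (B.card : ℝ) ≤ x^σ * Real.exp (4 * ∑ p ∈ Nat.primesBelow N, (p:ℝ)^(-σ)) := by
  have h0 : ∀ p : ℕ, 0 ≤ (p:ℝ)^(-σ) := fun p => Real.rpow_nonneg (Nat.cast_nonneg p) _
  have hlt : ∀ {p : ℕ}, p.Prime → ‖powHom σ p‖ < 1 := by
    intro p hp
    change ‖(p:ℝ)^(-σ)‖ < 1
    rw [Real.norm_of_nonneg (h0 p)]
    linarith [prime_rpow_le σ hσ p hp]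
  have hs := (EulerProduct.summable_and_hasSum_smoothNumbers_prod_primesBelow_geometric hlt N).2
  have hsum : ∑ n ∈ B, (n:ℝ)^(-σ) ≤ ∏ p ∈ N.primesBelow, (1 - powHom σ p)⁻¹ := by
    classical
    have := sum_le_hasSum (B.subtype (fun n => n ∈ Nat.smoothNumbers N)) (fun i _ => h0 i) hs
    refine le_trans (le_of_eq ?_) this
    exact (Finset.sum_subtype_of_mem (fun n : ℕ => (n:ℝ)^(-σ)) (fun n hn => (hB n hn).1)).symm
  have hprod : ∏ p ∈ N.primesBelow, (1 - powHom σ p)⁻¹ ≤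
      Real.exp (4 * ∑ p ∈ Nat.primesBelow N, (p:ℝ)^(-σ)) := by
    rw [Finset.mul_sum, Real.exp_sum]
    apply Finset.prod_le_prod
    · intro p hp
      have := prime_rpow_le σ hσ p (Nat.mem_primesBelow.1 hp).2
      change 0 ≤ (1 - (p:ℝ)^(-σ))⁻¹
      rw [inv_nonneg]; linarith
    · intro p hp
      have := prime_rpow_le σ hσ p (Nat.mem_primesBelow.1 hp).2
      change (1 - (p:ℝ)^(-σ))⁻¹ ≤ _
      have h1 := h0 p
      generalize (p:ℝ)^(-σ) = t at *
      refine le_trans ?_ (Real.add_one_le_exp (4*t))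
      rw [inv_le_iff_one_le_mul₀ (by linarith)]
      nlinarith
  have hxσ : 0 < x^σ := Real.rpow_pos_of_pos (by linarith) _
  calc (B.card : ℝ) = ∑ n ∈ B, (1:ℝ) := by simp
    _ ≤ ∑ n ∈ B, x^σ * (n:ℝ)^(-σ) := by
        apply Finset.sum_le_sum
        intro n hn
        obtain ⟨h1, h2⟩ := hB n hn
        have hn0 : (0:ℝ) < n := by
          exact_mod_cast Nat.pos_of_ne_zero (Nat.ne_zero_of_mem_smoothNumbers h1)
        rw [Real.rpow_neg hn0.le, ← div_eq_mul_inv, one_le_div (Real.rpow_pos_of_pos hn0 _)]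
        exact Real.rpow_le_rpow hn0.le h2 (by linarith)
    _ = x^σ * ∑ n ∈ B, (n:ℝ)^(-σ) := by rw [Finset.mul_sum]
    _ ≤ _ := by gcongr; exact hsum.trans hprod

lemma square_count (x : ℝ) (hx : 1 ≤ x) (N : ℕ) (hN : 1 ≤ N) (D : Finset ℕ)
    (hD : ∀ n ∈ D, 1 ≤ n ∧ (n:ℝ) ≤ x ∧ ∃ p, N ≤ p ∧ p^2 ∣ n) :
    (D.card : ℝ) ≤ x * (2 / N) := by
  classical
  set X := ⌊x⌋₊
  have hsub : D ⊆ (Finset.Ioo (N-1) (X+1)).biUnion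
      (fun d => (Finset.Ioc 0 X).filter (fun n => d^2 ∣ n)) := by
    intro n hn
    obtain ⟨h1, h2, p, hp, hpn⟩ := hD n hn
    have hnX : n ≤ X := Nat.le_floor h2
    simp only [Finset.mem_biUnion, Finset.mem_Ioo, Finset.mem_filter, Finset.mem_Ioc]
    refine ⟨p, ⟨by omega, ?_⟩, ⟨by omega, hnX⟩, hpn⟩
    have := Nat.le_of_dvd (by omega) hpn
    nlinarith
  have hc : (D.card : ℝ) ≤ ∑ d ∈ Finset.Ioo (N-1) (X+1), x * ((d:ℝ)^2)⁻¹ := by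
    have h := (Finset.card_le_card hsub).trans Finset.card_biUnion_le
    have h' : (D.card : ℝ) ≤ ∑ d ∈ Finset.Ioo (N-1) (X+1),
      (((Finset.Ioc 0 X).filter (fun n => d^2 ∣ n)).card : ℝ) := by exact_mod_cast h
    refine h'.trans (Finset.sum_le_sum ?_)
    intro d _
    rw [Nat.Ioc_filter_dvd_card_eq_div]
    refine Nat.cast_div_le.trans ?_
    push_cast
    rw [div_eq_mul_inv]
    gcongr
    exact Nat.floor_le (by linarith)
  rw [← Finset.mul_sum] at hc
  refine hc.trans ?_
  gcongr
  have := sum_Ioo_inv_sq_le (α := ℝ) (N-1) (X+1)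
  refine this.trans (le_of_eq ?_)
  rw [Nat.cast_sub hN]; simp

lemma split_bound (x σ : ℝ) (hx : 1 ≤ x) (hσ : 1/2 ≤ σ) (N : ℕ) (hN : 1 ≤ N) :
    (((Finset.Icc 2 ⌊x⌋₊).filter (fun n => (maxPrimeFac n) ^ 2 ∣ n)).card : ℝ) ≤
      x^σ * Real.exp (4 * ∑ p ∈ Nat.primesBelow N, (p:ℝ)^(-σ)) + x * (2 / N) := by
  classical
  set A := (Finset.Icc 2 ⌊x⌋₊).filter (fun n => (maxPrimeFac n) ^ 2 ∣ n)
  have hA : ∀ n ∈ A, 2 ≤ n ∧ (n:ℝ) ≤ x ∧ (maxPrimeFac n)^2 ∣ n := by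
    intro n hn
    simp only [A, Finset.mem_filter, Finset.mem_Icc] at hn
    exact ⟨hn.1.1, (Nat.le_floor_iff (by linarith)).1 hn.1.2, hn.2⟩
  rw [← Finset.card_filter_add_card_filter_not (s := A) (fun n => maxPrimeFac n < N)]
  push_cast
  apply add_le_add
  · apply rankin x σ hx hσ
    intro n hn
    rw [Finset.mem_filter] at hn
    obtain ⟨h1, h2, h3⟩ := hA n hn.1
    refine ⟨?_, h2⟩
    rw [Nat.mem_smoothNumbers']
    intro p hp hpn
    refine lt_of_le_of_lt ?_ hn.2
    exact Finset.le_sup (f := _root_.id) (Nat.mem_primeFactors.2 ⟨hp, hpn, by omega⟩)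
  · apply square_count x hx N hN
    intro n hn
    rw [Finset.mem_filter] at hn
    obtain ⟨h1, h2, h3⟩ := hA n hn.1
    exact ⟨by omega, h2, _, not_lt.1 hn.2, h3⟩

lemma main_bound (x : ℝ) (hx : 16 ≤ x) :
    ∃ v : ℝ, 0 < v ∧ v^4 ≤ √(Real.log x * Real.log (Real.log x)) ∧
    (((Finset.Icc 2 ⌊x⌋₊).filter (fun n => (maxPrimeFac n) ^ 2 ∣ n)).card : ℝ) ≤
      x * Real.exp (-(1/2) * √(Real.log x * Real.log (Real.log x))) *
        (Real.exp (384 * v^3) + 2) := by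
  have hx0 : 0 < x := by linarith
  set t := Real.log x with ht
  set w := Real.log t with hw
  set L := √(t * w) with hL
  have htle : Real.exp 1 ≤ t := by
    have h1 : Real.log 16 ≤ t := Real.log_le_log (by norm_num) hx
    rw [show (16:ℝ) = 2^4 by norm_num, Real.log_pow] at h1
    have := Real.log_two_gt_d9
    have := Real.exp_one_lt_d9
    push_cast at h1
    linarith
  have ht1 : 2 ≤ t := by have := Real.add_one_le_exp (1:ℝ); linarith
  have ht0 : 0 < t := by linarith
  have hw1 : 1 ≤ w := by rw [hw, Real.le_log_iff_exp_le ht0]; exact htle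
  have hwt : w ≤ t := by have := Real.log_le_sub_one_of_pos ht0; linarith
  have htw : 0 ≤ t * w := by positivity
  have hL2 : L^2 = t * w := Real.sq_sqrt htw
  have hL0 : 0 ≤ L := Real.sqrt_nonneg _
  have hLt : L ≤ t := by
    rw [hL, Real.sqrt_le_left ht0.le]; nlinarith
  set v := Real.exp (w/8) with hv
  have hvn : ∀ n : ℕ, v^n = Real.exp (n * (w/8)) := fun n => by rw [hv, Real.exp_nat_mul]
  have hv8 : v^8 = t := by
    rw [hvn, show ((8:ℕ):ℝ) * (w/8) = w by push_cast; ring, hw, Real.exp_log ht0]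
  have hv0 : 0 < v := Real.exp_pos _
  have hwv : w ≤ 8 * v := by have := Real.add_one_le_exp (w/8); linarith
  refine ⟨v, hv0, ?_, ?_⟩
  · apply Real.le_sqrt_of_sq_le
    calc (v^4)^2 = v^8 := by ring
      _ = t * 1 := by rw [hv8, mul_one]
      _ ≤ t * w := by gcongr
  set δ := L / (2 * t) with hδ
  have hδ0 : 0 ≤ δ := by positivity
  have hδ1 : δ ≤ 1/2 := by
    rw [hδ, div_le_iff₀ (by positivity)]; linarith
  set y := Real.exp (L/2) with hy
  have hy0 : 0 < y := Real.exp_pos _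
  set N := ⌊y⌋₊ + 1 with hN
  have hNy : y ≤ N := by rw [hN]; push_cast; exact (Nat.lt_floor_add_one y).le
  have hyδ : y^δ = v^2 := by
    rw [hvn, hy, ← Real.exp_mul]
    congr 1
    rw [hδ]
    push_cast
    field_simp
    rw [hL2]; ring
  have hxσ : x^(1-δ) = x * Real.exp (-(1/2) * L) := by
    rw [sub_eq_add_neg, Real.rpow_add hx0, Real.rpow_one, Real.rpow_def_of_pos hx0, ← ht]
    congr 2
    rw [hδ]; field_simp
  have hk : N ≤ 2^(⌈t⌉₊+1) := by
    have h1 : y ≤ (2:ℝ)^⌈t⌉₊ := by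
      have : (2:ℝ)^⌈t⌉₊ = Real.exp (⌈t⌉₊ * Real.log 2) := by
        rw [Real.exp_nat_mul, Real.exp_log (by norm_num)]
      rw [this, hy]
      apply Real.exp_le_exp.2
      have h3 := Nat.le_ceil t
      have := Real.log_two_gt_d9
      nlinarith
    have h2 : ⌊y⌋₊ ≤ 2^⌈t⌉₊ := by
      apply Nat.floor_le_of_le
      push_cast; exact h1
    have h3 : 1 ≤ 2^⌈t⌉₊ := Nat.one_le_two_pow
    rw [hN, pow_succ]; omega
  have hS := sum_inv_primes _ N hk
  have hlogk : Real.log ⌈t⌉₊ ≤ 1 + w := by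
    have h1 : (⌈t⌉₊ : ℝ) ≤ 2 * t := by have := Nat.ceil_lt_add_one ht0.le; linarith
    have h0 : (0:ℝ) < ⌈t⌉₊ := lt_of_lt_of_le ht0 (Nat.le_ceil t)
    have h2 := Real.log_le_log h0 h1
    rw [Real.log_mul (by norm_num) ht0.ne'] at h2
    have := Real.log_two_lt_d9
    linarith
  have hS2 : ∑ p ∈ Nat.primesBelow N, (1/(p:ℝ)) ≤ 96 * v := by linarith
  have hS3 : ∑ p ∈ Nat.primesBelow N, (p:ℝ)^(-(1-δ)) ≤ 96 * v^3 := by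
    calc _ ≤ ∑ p ∈ Nat.primesBelow N, v^2 * (1/(p:ℝ)) := by
          apply Finset.sum_le_sum
          intro p hp
          obtain ⟨h1, h2⟩ := Nat.mem_primesBelow.1 hp
          have hp0 : (0:ℝ) < p := by exact_mod_cast h2.pos
          have hpy : (p:ℝ) ≤ y := (Nat.le_floor_iff hy0.le).1 (by omega)
          rw [show -(1-δ) = δ + (-1) by ring, Real.rpow_add hp0, Real.rpow_neg_one, one_div,
            ← hyδ]
          gcongr
      _ = v^2 * ∑ p ∈ Nat.primesBelow N, (1/(p:ℝ)) := by rw [Finset.mul_sum]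
      _ ≤ v^2 * (96 * v) := by gcongr
      _ = _ := by ring
  have key := split_bound x (1-δ) (by linarith) (by linarith) N (by omega)
  refine key.trans ?_
  rw [hxσ, mul_add]
  apply add_le_add
  · have h4 := Real.exp_le_exp.2 (show 4 * ∑ p ∈ Nat.primesBelow N, (p:ℝ)^(-(1-δ)) ≤ 384 * v^3 by
      linarith)
    exact mul_le_mul_of_nonneg_left h4 (by positivity)
  · rw [mul_assoc]
    gcongr
    rw [show -(1/2) * L = -(L/2) by ring, Real.exp_neg, ← hy, mul_comm, ← div_eq_mul_inv]
    gcongr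

/-- For every `ε > 0` there is `C > 0` such that for all `x ≥ 16`, the number of
`2 ≤ n ≤ x` whose largest prime factor repeats (`P(n)² ∣ n`) is at most
`C x exp(−(1/2 − ε)√(log x · log log x))`. -/
theorem count_repeated_largest_prime_factor :
    ∀ ε > (0 : ℝ), ∃ C > (0 : ℝ), ∀ x : ℝ, 16 ≤ x →
      (((Finset.Icc 2 ⌊x⌋₊).filter (fun n => (maxPrimeFac n) ^ 2 ∣ n)).card : ℝ)
        ≤ C * x * Real.exp (-(1/2 - ε) * Real.sqrt (Real.log x * Real.log (Real.log x))) := by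
  intro ε hε
  refine ⟨Real.exp (384 * (384/ε)^3) + 2, by positivity, ?_⟩
  intro x hx
  obtain ⟨v, hv0, hvL, hb⟩ := main_bound x hx
  refine hb.trans ?_
  set L := √(Real.log x * Real.log (Real.log x)) with hL
  have hL0 : 0 ≤ L := Real.sqrt_nonneg _
  have hεL : 0 ≤ ε * L := by positivity
  have hv : 384 * v^3 ≤ 384 * (384/ε)^3 + ε * L := by
    rcases le_total v (384/ε) with h | h
    · have : v^3 ≤ (384/ε)^3 := by gcongr
      linarith
    · rw [div_le_iff₀ hε] at h
      have h1 : 384 * v^3 ≤ ε * v^4 := by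
        calc 384 * v^3 ≤ (v * ε) * v^3 := by gcongr
          _ = _ := by ring
      have h2 : ε * v^4 ≤ ε * L := by gcongr
      have h3 : 0 ≤ 384 * (384/ε)^3 := by positivity
      linarith
  have h1 : Real.exp (384 * v^3) ≤ Real.exp (384 * (384/ε)^3) * Real.exp (ε * L) := by
    rw [← Real.exp_add]; exact Real.exp_le_exp.2 hv
  have h2 : 1 ≤ Real.exp (ε * L) := Real.one_le_exp hεL
  have hx0 : 0 < x := by linarith
  calc _ ≤ x * Real.exp (-(1/2) * L) *
        (Real.exp (384 * (384/ε)^3) * Real.exp (ε * L) + 2 * Real.exp (ε * L)) := by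
          gcongr
          linarith
    _ = (Real.exp (384 * (384/ε)^3) + 2) * x * (Real.exp (-(1/2) * L) * Real.exp (ε * L)) := by
          ring
    _ = _ := by
          rw [← Real.exp_add]
          congr 2
          ring
end

section
/- Let k ≥ 2 and ℓ be fixed integers with 1 ≤ ℓ < k and gcd(ℓ, k) = 1. Then there exists a constant C > 0 (depending on k) such that for all real x ≥ 16, |#{n ≤ x : ω(n) ≥ 2 and P₂(n) ≡ ℓ (mod k)} − x/φ(k)| ≤ C · x · (log log x)² / log x. In particular, the sequence P₂(n) of second largest prime factors is uniformly distributed among the reduced residue classes modulo k. -/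
open Finset Real

/-- The second largest distinct prime factor of `n`: the largest prime factor of `n`
strictly less than `P(n)`, defined when `ω(n) ≥ 2` (junk value `1` otherwise). -/
def secondLargestPrimeFac (n : ℕ) : ℕ :=
  ((n.primeFactors.sort (· ≤ ·)).reverse).getD 1 1

local notation "Λ" => ArithmeticFunction.vonMangoldt

theorem abel_bound {E : Type*} [NormedAddCommGroup E] [NormedSpace ℝ E] (e : ℕ → E) (g : ℕ → ℝ)
    (M : ℝ) (a b : ℕ) (hM : ∀ m, ‖∑ n ∈ Ico a m, e n‖ ≤ M)
    (hg : ∀ n, a ≤ n → g (n+1) ≤ g n) (hg0 : ∀ n, a ≤ n → 0 ≤ g n) :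
    ‖∑ n ∈ Ico a b, g n • e n‖ ≤ M * g a := by
  have hM0 : 0 ≤ M := le_trans (norm_nonneg _) (hM a)
  rcases le_total b a with h | h
  · rw [Finset.Ico_eq_empty_of_le h]; simp
    exact mul_nonneg hM0 (hg0 a le_rfl)
  have key : ∀ b, a ≤ b → ‖∑ n ∈ Ico a b, g n • e n - g b • ∑ n ∈ Ico a b, e n‖ ≤ M * (g a - g b) := by
    intro b hb
    induction b, hb using Nat.le_induction with
    | base => simp
    | succ b hb ih =>
      rw [Finset.sum_Ico_succ_top hb, Finset.sum_Ico_succ_top hb]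
      have : ∑ n ∈ Ico a b, g n • e n + g b • e b - g (b+1) • (∑ n ∈ Ico a b, e n + e b)
        = (∑ n ∈ Ico a b, g n • e n - g b • ∑ n ∈ Ico a b, e n)
          + (g b - g (b+1)) • (∑ n ∈ Ico a (b+1), e n) := by
        rw [Finset.sum_Ico_succ_top hb]; module
      rw [this]
      refine (norm_add_le _ _).trans ?_
      rw [norm_smul, Real.norm_of_nonneg (sub_nonneg.2 (hg b hb))]
      have := mul_le_mul_of_nonneg_left (hM (b+1)) (sub_nonneg.2 (hg b hb))
      linarith
  have h1 := key b h
  have h2 : ‖g b • ∑ n ∈ Ico a b, e n‖ ≤ g b * M := by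
    rw [norm_smul, Real.norm_of_nonneg (hg0 b h)]
    exact mul_le_mul_of_nonneg_left (hM b) (hg0 b h)
  have := norm_add_le (∑ n ∈ Ico a b, g n • e n - g b • ∑ n ∈ Ico a b, e n) (g b • ∑ n ∈ Ico a b, e n)
  rw [sub_add_cancel] at this
  linarith

theorem sum_Icc_dvd_swap {R : Type*} [CommSemiring R] (f : ℕ → ℕ → R) (N : ℕ) :
    ∑ n ∈ Icc 1 N, ∑ d ∈ n.divisors, f d (n / d) =
      ∑ d ∈ Icc 1 N, ∑ m ∈ Icc 1 (N / d), f d m := by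
  rw [Finset.sum_sigma', Finset.sum_sigma']
  refine Finset.sum_bij' (fun x _ => ⟨x.2, x.1 / x.2⟩) (fun x _ => ⟨x.1 * x.2, x.1⟩) ?_ ?_ ?_ ?_ ?_
  · rintro ⟨n, d⟩ h
    simp only [mem_sigma, mem_Icc, Nat.mem_divisors] at h ⊢
    have hd : 0 < d := Nat.pos_of_dvd_of_pos h.2.1 (by omega)
    have := Nat.le_of_dvd (by omega) h.2.1
    exact ⟨⟨hd, by omega⟩, Nat.div_pos this hd, Nat.div_le_div_right h.1.2⟩
  · rintro ⟨d, m⟩ h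
    simp only [mem_sigma, mem_Icc, Nat.mem_divisors] at h ⊢
    have := (Nat.le_div_iff_mul_le (by omega)).1 h.2.2
    have h3 : 0 < d * m := Nat.mul_pos (by omega) (by omega)
    exact ⟨⟨h3, by rwa [mul_comm]⟩, ⟨m, rfl⟩, by omega⟩
  · rintro ⟨n, d⟩ h
    simp only [mem_sigma, mem_Icc, Nat.mem_divisors] at h ⊢
    rw [Nat.mul_div_cancel' h.2.1]
  · rintro ⟨d, m⟩ h
    simp only [mem_sigma, mem_Icc] at h ⊢
    rw [Nat.mul_div_cancel_left _ (by omega)]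
  · rintro ⟨n, d⟩ h
    rfl


theorem psi_bound (N : ℕ) : ∑ n ∈ Icc 1 N, Λ n ≤ 6 * N := by
  have := Chebyshev.psi_le_const_mul_self (x := (N:ℝ)) (by positivity)
  rw [Chebyshev.psi_eq_sum_Icc, Nat.floor_natCast] at this
  have h4 : Real.log 4 + 4 ≤ 6 := by
    have : Real.log 4 = 2 * Real.log 2 := by
      rw [show (4:ℝ) = 2 ^ 2 by norm_num, Real.log_pow]; norm_num
    rw [this]; linarith [Real.log_two_lt_d9]
  have h5 : ∑ n ∈ Icc 1 N, Λ n ≤ ∑ n ∈ Icc 0 N, Λ n :=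
    Finset.sum_le_sum_of_subset_of_nonneg (Finset.Icc_subset_Icc_left (by omega))
      (fun _ _ _ => ArithmeticFunction.vonMangoldt_nonneg)
  refine h5.trans (this.trans ?_)
  gcongr

theorem sum_log_bounds (N : ℕ) : N * Real.log N - N ≤ ∑ n ∈ Icc 1 N, Real.log n ∧
    ∑ n ∈ Icc 1 N, Real.log n ≤ N * Real.log N := by
  constructor
  · induction N with
    | zero => simp
    | succ N ih =>
      rw [Finset.sum_Icc_succ_top (by omega)]
      rcases Nat.eq_zero_or_pos N with rfl | hN
      · simp
      have hN' : (0:ℝ) < N := by exact_mod_cast hN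
      have : Real.log (N+1) - Real.log N ≤ 1 / N := by
        rw [← Real.log_div (by positivity) (by positivity)]
        refine (Real.log_le_sub_one_of_pos (by positivity)).trans (le_of_eq ?_)
        field_simp; ring
      have h2 : (N:ℝ) * (Real.log (N+1) - Real.log N) ≤ 1 := by
        calc _ ≤ (N:ℝ) * (1 / N) := by gcongr
          _ = 1 := by field_simp
      push_cast
      linarith
  · calc _ ≤ ∑ n ∈ Icc 1 N, Real.log N := by
          refine Finset.sum_le_sum fun n hn => ?_
          simp at hn
          exact Real.log_le_log (by exact_mod_cast hn.1) (by exact_mod_cast hn.2)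
      _ = _ := by simp

theorem sum_log_eq (N : ℕ) : ∑ n ∈ Icc 1 N, Real.log n = ∑ d ∈ Icc 1 N, Λ d * ((N / d : ℕ) : ℝ) := by
  have := sum_Icc_dvd_swap (fun d _ => Λ d) N
  simp only [ArithmeticFunction.vonMangoldt_sum, Finset.sum_const, Nat.card_Icc,
    add_tsub_cancel_right, nsmul_eq_mul] at this
  rw [this]
  exact Finset.sum_congr rfl fun _ _ => mul_comm _ _

/-- Mertens. -/
theorem mertens_vm (N : ℕ) (hN : 1 ≤ N) :
    |∑ n ∈ Icc 1 N, Λ n / n - Real.log N| ≤ 6 := by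
  have hN' : (0:ℝ) < N := by exact_mod_cast hN
  have h1 := sum_log_eq N
  obtain ⟨h2, h3⟩ := sum_log_bounds N
  have h4 : ∑ d ∈ Icc 1 N, Λ d * ((N / d : ℕ) : ℝ) ≤ N * ∑ n ∈ Icc 1 N, Λ n / n := by
    rw [Finset.mul_sum]
    refine Finset.sum_le_sum fun d hd => ?_
    have : ((N / d : ℕ) : ℝ) ≤ N / d := Nat.cast_div_le
    calc _ ≤ Λ d * (N / d) := mul_le_mul_of_nonneg_left this ArithmeticFunction.vonMangoldt_nonneg
      _ = _ := by ring
  have h5 : N * ∑ n ∈ Icc 1 N, Λ n / n ≤ ∑ d ∈ Icc 1 N, Λ d * ((N / d : ℕ) : ℝ) + ∑ d ∈ Icc 1 N, Λ d := by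
    rw [Finset.mul_sum, ← Finset.sum_add_distrib]
    refine Finset.sum_le_sum fun d hd => ?_
    have : (N:ℝ) / d ≤ ((N / d : ℕ) : ℝ) + 1 := by
      have := Nat.lt_floor_add_one ((N:ℝ)/d)
      rw [Nat.floor_div_natCast, Nat.floor_natCast] at this
      exact this.le
    calc _ = Λ d * (N / d) := by ring
      _ ≤ Λ d * (((N / d : ℕ) : ℝ) + 1) := mul_le_mul_of_nonneg_left this ArithmeticFunction.vonMangoldt_nonneg
      _ = _ := by ring
  have h6 := psi_bound N
  rw [abs_le]
  constructor
  · by_contra! h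
    nlinarith
  · by_contra! h
    nlinarith

theorem vm_block (a b : ℕ) (ha : 1 ≤ a) (hab : a ≤ b) :
    ∑ n ∈ Ioc a b, Λ n / n ≤ Real.log (b / a) + 12 := by
  have h1 := abs_le.1 (mertens_vm a ha)
  have h2 := abs_le.1 (mertens_vm b (by omega))
  have h3 : ∑ n ∈ Icc 1 b, Λ n / n = ∑ n ∈ Icc 1 a, Λ n / n + ∑ n ∈ Ioc a b, Λ n / n := by
    rw [← Finset.sum_union]
    · congr 1; ext n; simp; omega
    · rw [Finset.disjoint_left]; intro n; simp; omega
  rw [Real.log_div (Nat.cast_ne_zero.2 (by omega)) (Nat.cast_ne_zero.2 (by omega))]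
  linarith

theorem vm_nonprime : ∃ C : ℝ, 0 ≤ C ∧ ∀ s : Finset ℕ, ∑ n ∈ s, (if n.Prime then 0 else Λ n / n) ≤ C := by
  have := ArithmeticFunction.vonMangoldt.summable_residueClass_non_primes_div (q := 1) (a := 0)
  have h0 : ∀ n : ℕ, 0 ≤ (if n.Prime then 0 else Λ n / n : ℝ) := by
    intro n; split_ifs
    · exact le_rfl
    · exact div_nonneg ArithmeticFunction.vonMangoldt_nonneg (by positivity)
  have h : (fun n : ℕ => (if n.Prime then 0 else Λ n / n : ℝ)) = fun n : ℕ ↦ (if n.Prime then 0 else ArithmeticFunction.vonMangoldt.residueClass (0 : ZMod 1) n) / n := by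
    ext n
    split_ifs
    · simp
    · congr 1
      exact (Set.indicator_of_mem (s := {n : ℕ | (n : ZMod 1) = 0}) (Subsingleton.elim _ _) _).symm
  refine ⟨∑' n : ℕ, (if n.Prime then 0 else Λ n / n : ℝ), tsum_nonneg h0, fun s => ?_⟩
  refine Summable.sum_le_tsum s (fun i _ => h0 i) ?_
  rw [h]; exact this

theorem char_partial {k : ℕ} [NeZero k] (χ : DirichletCharacter ℂ k) (hχ : χ ≠ 1) (m : ℕ) :
    ‖∑ n ∈ range m, χ (n : ZMod k)‖ ≤ k := by
  have hk : 0 < k := Nat.pos_of_neZero k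
  have h0 : ∑ n ∈ range k, χ (n : ZMod k) = 0 := by
    rw [← MulChar.sum_eq_zero_of_ne_one hχ]
    refine Finset.sum_bij (fun n _ => (n : ZMod k)) (fun _ _ => mem_univ _) ?_ ?_ (fun _ _ => rfl)
    · intro a ha b hb h
      simp at ha hb
      have := (ZMod.natCast_eq_natCast_iff' a b k).1 h
      rwa [Nat.mod_eq_of_lt ha, Nat.mod_eq_of_lt hb] at this
    · intro b _
      exact ⟨b.val, by simp [ZMod.val_lt], by simp⟩
  have hper : ∀ m, ∑ n ∈ range (m + k), χ (n : ZMod k) = ∑ n ∈ range m, χ (n : ZMod k) := by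
    intro m
    induction m with
    | zero => simpa using h0
    | succ m ih =>
      rw [show m + 1 + k = (m + k) + 1 by ring, sum_range_succ, ih, sum_range_succ]
      simp
  induction m using Nat.strong_induction_on with
  | _ m ih =>
    rcases lt_or_ge m k with h | h
    · refine (norm_sum_le _ _).trans ?_
      calc _ ≤ ∑ n ∈ range m, (1:ℝ) := sum_le_sum fun n _ => DirichletCharacter.norm_le_one χ _
        _ = m := by simp
        _ ≤ k := by exact_mod_cast h.le
    · obtain ⟨c, rfl⟩ := Nat.exists_eq_add_of_le' h
      rw [hper]
      exact ih c (by omega)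

theorem char_Ico {k : ℕ} [NeZero k] (χ : DirichletCharacter ℂ k) (hχ : χ ≠ 1) (a m : ℕ) :
    ‖∑ n ∈ Ico a m, χ (n : ZMod k)‖ ≤ 2 * k := by
  rcases le_total m a with h | h
  · rw [Finset.Ico_eq_empty_of_le h]; simp
  rw [Finset.sum_Ico_eq_sub _ h]
  refine (norm_sub_le _ _).trans ?_
  linarith [char_partial χ hχ m, char_partial χ hχ a]

theorem char_log {k : ℕ} [NeZero k] (χ : DirichletCharacter ℂ k) (hχ : χ ≠ 1) :
    ∃ C : ℝ, ∀ N : ℕ, ‖∑ n ∈ Icc 1 N, χ (n : ZMod k) * (Real.log n / n : ℝ)‖ ≤ C := by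
  refine ⟨∑ n ∈ Ico (1:ℕ) 3, ‖χ (n : ZMod k) * (Real.log n / n : ℝ)‖ + 2 * k * (Real.log 3 / 3), fun N => ?_⟩
  have hb := abel_bound (fun n : ℕ => χ (n : ZMod k)) (fun n => Real.log n / n) (2 * k) 3 (N+1)
    (fun m => char_Ico χ hχ 3 m) (fun n hn => ?_) (fun n hn => ?_)
  · have hI : Icc 1 N = Ico 1 (N+1) := by ext; simp
    have h0 : 0 ≤ ‖∑ n ∈ Ico (3:ℕ) (N+1), (Real.log n / n : ℝ) • χ (n : ZMod k)‖ := norm_nonneg _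
    rw [hI]
    simp only [Nat.cast_ofNat] at hb
    rcases le_total (N+1) 3 with h | h
    · refine (norm_sum_le _ _).trans ?_
      have : ∑ n ∈ Ico (1:ℕ) (N+1), ‖χ (n : ZMod k) * (Real.log n / n : ℝ)‖ ≤ ∑ n ∈ Ico (1:ℕ) 3, ‖χ (n : ZMod k) * (Real.log n / n : ℝ)‖ :=
        sum_le_sum_of_subset_of_nonneg (Ico_subset_Ico_right h) (fun _ _ _ => norm_nonneg _)
      linarith
    · rw [← Finset.sum_Ico_consecutive _ (by norm_num : 1 ≤ 3) h]
      refine (norm_add_le _ _).trans (add_le_add (norm_sum_le _ _) ?_)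
      refine le_trans (le_of_eq ?_) hb
      congr 1
      refine sum_congr rfl fun n _ => ?_
      rw [Complex.real_smul, mul_comm]
  · have h3 : Real.exp 1 ≤ n := by
      have : (3:ℝ) ≤ n := by exact_mod_cast hn
      linarith [Real.exp_one_lt_d9]
    exact Real.log_div_self_antitoneOn h3 (by simp; linarith) (by simp)
  · positivity

theorem char_L1 {k : ℕ} [NeZero k] (χ : DirichletCharacter ℂ k) (hχ : χ ≠ 1) (N : ℕ) :
    ‖∑ n ∈ Icc 1 N, χ (n : ZMod k) / (n : ℂ) - χ.LFunction 1‖ ≤ 2 * k / (N + 1) := by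
  have hI : ∀ M, Icc 1 M = Ico 1 (M+1) := by intro M; ext; simp
  have key : ∀ s : ℝ, 1 < s → ‖∑ n ∈ Icc 1 N, χ (n : ZMod k) / (n : ℂ) ^ (s : ℂ) - χ.LFunction s‖
      ≤ 2 * k / (N + 1) := by
    intro s hs
    rw [DirichletCharacter.LFunction_eq_LSeries χ (by simpa using hs)]
    have hsum : LSeriesSummable (fun n => χ n) (s:ℂ) :=
      DirichletCharacter.LSeriesSummable_of_one_lt_re χ (by simpa using hs)
    have ht := hsum.hasSum.tendsto_sum_nat
    have ht2 : Filter.Tendsto (fun M => ∑ n ∈ Icc 1 N, χ (n : ZMod k) / (n : ℂ) ^ (s : ℂ) -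
        ∑ n ∈ range M, LSeries.term (fun n => χ n) (s:ℂ) n) Filter.atTop
        (nhds (∑ n ∈ Icc 1 N, χ (n : ZMod k) / (n : ℂ) ^ (s : ℂ) - LSeries (fun n => χ n) s)) :=
      tendsto_const_nhds.sub ht
    refine le_of_tendsto ht2.norm ?_
    filter_upwards [Filter.eventually_ge_atTop (N+1)] with M hM
    have e1 : ∑ n ∈ range M, LSeries.term (fun n => χ n) (s:ℂ) n =
        ∑ n ∈ Icc 1 N, χ (n : ZMod k) / (n : ℂ) ^ (s : ℂ) +
        ∑ n ∈ Ico (N+1) M, ((n:ℝ) ^ (-s)) • χ (n : ZMod k) := by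
      rw [hI, Finset.range_eq_Ico, Finset.sum_eq_sum_Ico_succ_bot (by omega), LSeries.term_zero, zero_add,
        ← Finset.sum_Ico_consecutive _ (by omega : 1 ≤ N + 1) hM]
      congr 1
      · refine sum_congr rfl fun n hn => ?_
        simp at hn
        rw [LSeries.term_of_ne_zero (by omega)]
      · refine sum_congr rfl fun n hn => ?_
        simp at hn
        rw [LSeries.term_of_ne_zero (by omega), Complex.real_smul, Complex.ofReal_cpow (by positivity)]
        push_cast
        rw [Complex.cpow_neg]; ring
    rw [e1, sub_add_cancel_left, norm_neg]
    refine (abel_bound (fun n : ℕ => χ (n : ZMod k)) (fun n => (n:ℝ) ^ (-s)) (2 * k) (N+1) M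
      (fun m => char_Ico χ hχ _ m) (fun n hn => ?_) (fun n hn => by positivity)).trans ?_
    · have : (0:ℝ) < n := by exact_mod_cast (by omega : 0 < n)
      exact Real.rpow_le_rpow_of_nonpos this (by push_cast; linarith) (by linarith)
    · rw [div_eq_mul_inv]
      gcongr
      rw [← Real.rpow_neg_one]
      push_cast
      exact Real.rpow_le_rpow_of_exponent_le (by linarith [(Nat.cast_nonneg N : (0:ℝ) ≤ N)]) (by linarith)
  have hc : Filter.Tendsto (fun s : ℝ => ∑ n ∈ Icc 1 N, χ (n : ZMod k) / (n : ℂ) ^ (s : ℂ) - χ.LFunction s)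
      (nhdsWithin 1 (Set.Ioi 1)) (nhds (∑ n ∈ Icc 1 N, χ (n : ZMod k) / (n : ℂ) ^ ((1:ℝ) : ℂ) - χ.LFunction ((1:ℝ):ℂ))) := by
    refine Filter.Tendsto.mono_left ?_ nhdsWithin_le_nhds
    refine ContinuousAt.tendsto (f := fun s : ℝ => ∑ n ∈ Icc 1 N, χ (n : ZMod k) / (n : ℂ) ^ (s : ℂ) - χ.LFunction s) ?_
    refine ContinuousAt.sub ?_ ?_
    · refine tendsto_finsetSum _ fun n hn => ?_
      simp at hn
      have hn0 : (n:ℂ) ≠ 0 := Nat.cast_ne_zero.2 (by omega)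
      refine Filter.Tendsto.div tendsto_const_nhds ?_ (by simp [hn0])
      exact (Complex.continuous_ofReal.continuousAt).const_cpow (Or.inl hn0)
    · exact ((DirichletCharacter.differentiable_LFunction hχ).continuous.comp Complex.continuous_ofReal).continuousAt
  have := le_of_tendsto hc.norm (Filter.eventually_of_mem self_mem_nhdsWithin fun s hs => key s hs)
  simpa using this

theorem char_vm {k : ℕ} [NeZero k] (χ : DirichletCharacter ℂ k) (hχ : χ ≠ 1) :
    ∃ C : ℝ, ∀ N : ℕ, ‖∑ n ∈ Icc 1 N, χ (n : ZMod k) * (Λ n / n : ℝ)‖ ≤ C := by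
  obtain ⟨C, hC⟩ := char_log χ hχ
  have hL : χ.LFunction 1 ≠ 0 := DirichletCharacter.LFunction_apply_one_ne_zero hχ
  refine ⟨(C + 12 * k) / ‖χ.LFunction 1‖, fun N => ?_⟩
  rw [le_div_iff₀ (norm_pos_iff.2 hL), ← norm_mul]
  rcases Nat.eq_zero_or_pos N with rfl | hN
  · simp
    have := hC 0
    simp at this
    positivity
  have hNr : (0:ℝ) < N := by exact_mod_cast hN
  have e1 : ∑ n ∈ Icc 1 N, χ (n : ZMod k) * (Real.log n / n : ℝ) =
      ∑ d ∈ Icc 1 N, (χ (d : ZMod k) * (Λ d / d : ℝ)) * ∑ m ∈ Icc 1 (N / d), χ (m : ZMod k) / (m : ℂ) := by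
    have := sum_Icc_dvd_swap (fun d m => (χ (d : ZMod k) * (Λ d / d : ℝ)) * (χ (m : ZMod k) / (m : ℂ))) N
    simp only [← Finset.mul_sum] at this
    rw [← this]
    refine sum_congr rfl fun n hn => ?_
    simp at hn
    rw [← ArithmeticFunction.vonMangoldt_sum, Finset.sum_div]
    push_cast
    rw [Finset.mul_sum]
    refine sum_congr rfl fun d hd => ?_
    have hd' := Nat.dvd_of_mem_divisors hd
    obtain ⟨c, rfl⟩ := hd'
    have hd0 : d ≠ 0 := by rintro rfl; simp at hn
    have hc0 : c ≠ 0 := by rintro rfl; simp at hn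
    rw [Nat.mul_div_cancel_left _ (by omega)]
    push_cast
    rw [map_mul]
    have : (d:ℂ) ≠ 0 := Nat.cast_ne_zero.2 hd0
    have : (c:ℂ) ≠ 0 := Nat.cast_ne_zero.2 hc0
    field_simp
  have e2 : (∑ n ∈ Icc 1 N, χ (n : ZMod k) * (Λ n / n : ℝ)) * χ.LFunction 1 =
      ∑ n ∈ Icc 1 N, χ (n : ZMod k) * (Real.log n / n : ℝ) -
      ∑ d ∈ Icc 1 N, (χ (d : ZMod k) * (Λ d / d : ℝ)) * (∑ m ∈ Icc 1 (N / d), χ (m : ZMod k) / (m : ℂ) - χ.LFunction 1) := by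
    rw [e1, ← Finset.sum_sub_distrib, Finset.sum_mul]
    refine sum_congr rfl fun d hd => ?_
    ring
  rw [e2]
  refine (norm_sub_le _ _).trans (add_le_add (hC N) ?_)
  refine (norm_sum_le _ _).trans ?_
  have : ∀ d ∈ Icc 1 N, ‖(χ (d : ZMod k) * (Λ d / d : ℝ)) * (∑ m ∈ Icc 1 (N / d), χ (m : ZMod k) / (m : ℂ) - χ.LFunction 1)‖
      ≤ Λ d * (2 * k / N) := by
    intro d hd
    simp at hd
    have hdr : (0:ℝ) < d := by exact_mod_cast hd.1
    have hΛ : 0 ≤ Λ d := ArithmeticFunction.vonMangoldt_nonneg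
    rw [norm_mul, norm_mul, Complex.norm_real, Real.norm_of_nonneg (div_nonneg hΛ hdr.le)]
    have h1 := char_L1 χ hχ (N / d)
    have h2 : (N:ℝ) / d ≤ ((N / d : ℕ) : ℝ) + 1 := by
      have := Nat.lt_floor_add_one ((N:ℝ)/d)
      rw [Nat.floor_div_natCast, Nat.floor_natCast] at this
      exact this.le
    have h3 : 2 * (k:ℝ) / (((N / d : ℕ) : ℝ) + 1) ≤ 2 * k / (N / d) := by gcongr
    calc _ ≤ 1 * (Λ d / d) * (2 * k / (N / d)) := by
          gcongr
          · exact DirichletCharacter.norm_le_one χ _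
          · exact h1.trans h3
      _ = _ := by field_simp
  refine (sum_le_sum this).trans ?_
  rw [← Finset.sum_mul]
  calc _ ≤ (6 * (N:ℝ)) * (2 * k / N) := by gcongr; exact psi_bound N
    _ = 12 * k := by field_simp; ring

noncomputable def epsRes (k ℓ p : ℕ) : ℝ := (if p ≡ ℓ [MOD k] then 1 else 0) - 1 / (Nat.totient k : ℝ)

theorem char_prime {k : ℕ} [NeZero k] (χ : DirichletCharacter ℂ k) (hχ : χ ≠ 1) :
    ∃ C : ℝ, ∀ N : ℕ, ‖∑ n ∈ Icc 1 N, if n.Prime then χ (n : ZMod k) * (Real.log n / n : ℝ) else 0‖ ≤ C := by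
  obtain ⟨C, hC⟩ := char_vm χ hχ
  obtain ⟨C', hC'0, hC'⟩ := vm_nonprime
  refine ⟨C + C', fun N => ?_⟩
  have : ∑ n ∈ Icc 1 N, (if n.Prime then χ (n : ZMod k) * (Real.log n / n : ℝ) else 0) =
      ∑ n ∈ Icc 1 N, χ (n : ZMod k) * (Λ n / n : ℝ) -
      ∑ n ∈ Icc 1 N, χ (n : ZMod k) * ((if n.Prime then 0 else Λ n / n : ℝ) : ℂ) := by
    rw [← sum_sub_distrib]
    refine sum_congr rfl fun n _ => ?_
    split_ifs with h
    · rw [ArithmeticFunction.vonMangoldt_apply_prime h]; simp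
    · simp
  rw [this]
  refine (norm_sub_le _ _).trans (add_le_add (hC N) ?_)
  refine (norm_sum_le _ _).trans (le_trans (sum_le_sum fun n _ => ?_) (hC' (Icc 1 N)))
  rw [norm_mul, Complex.norm_real, Real.norm_of_nonneg]
  · refine mul_le_of_le_one_left ?_ (DirichletCharacter.norm_le_one χ _)
    split_ifs
    · exact le_rfl
    · exact div_nonneg ArithmeticFunction.vonMangoldt_nonneg (by positivity)
  · split_ifs
    · exact le_rfl
    · exact div_nonneg ArithmeticFunction.vonMangoldt_nonneg (by positivity)

theorem triv_prime {k : ℕ} [NeZero k] :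
    ∃ C : ℝ, ∀ N : ℕ, ‖∑ n ∈ Icc 1 N, if n.Prime then ((1 : DirichletCharacter ℂ k) (n : ZMod k) - 1) * (Real.log n / n : ℝ) else 0‖ ≤ C := by
  refine ⟨∑ n ∈ k.divisors, Real.log n / n, fun N => ?_⟩
  refine (norm_sum_le _ _).trans ?_
  have h0 : ∀ n : ℕ, 0 ≤ Real.log n / n := fun n => by positivity
  calc _ ≤ ∑ n ∈ Icc 1 N, if n ∈ k.divisors then Real.log n / n else 0 := by
        refine sum_le_sum fun n _ => ?_
        by_cases hp : n.Prime
        · rw [if_pos hp]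
          by_cases hd : n ∣ k
          · rw [if_pos (by simp [hd, NeZero.ne])]
            rw [norm_mul, Complex.norm_real, Real.norm_of_nonneg (h0 n)]
            refine mul_le_of_le_one_left (h0 n) ?_
            rw [MulChar.map_nonunit]
            · simp
            · rw [ZMod.isUnit_iff_coprime]
              intro h
              have := Nat.Coprime.eq_one_of_dvd h hd
              exact hp.one_lt.ne' this
          · have : IsUnit (n : ZMod k) := (ZMod.isUnit_iff_coprime _ _).2 ((Nat.Prime.coprime_iff_not_dvd hp).2 hd)
            rw [MulChar.one_apply this]
            simp
            split_ifs
            · exact h0 n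
            · exact le_rfl
        · rw [if_neg hp]; simp
          split_ifs
          · exact h0 n
          · exact le_rfl
    _ = ∑ n ∈ Icc 1 N with n ∈ k.divisors, Real.log n / n := by rw [sum_filter]
    _ ≤ _ := sum_le_sum_of_subset_of_nonneg (fun n hn => (mem_filter.1 hn).2) (fun n _ _ => h0 n)

theorem eps_mertens (k ℓ : ℕ) (hk : 2 ≤ k) (hgcd : Nat.gcd ℓ k = 1) :
    ∃ C : ℝ, ∀ N : ℕ, |∑ n ∈ Icc 1 N, if n.Prime then epsRes k ℓ n * (Real.log n / n) else 0| ≤ C := by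
  have : NeZero k := ⟨by omega⟩
  classical
  have hu : IsUnit (ℓ : ZMod k) := (ZMod.isUnit_iff_coprime _ _).2 hgcd
  have hall : ∀ χ : DirichletCharacter ℂ k, ∃ C : ℝ, ∀ N : ℕ,
      ‖∑ n ∈ Icc 1 N, if n.Prime then (χ (ℓ : ZMod k)⁻¹ * χ (n : ZMod k) - (if χ = 1 then 1 else 0)) * (Real.log n / n : ℝ) else 0‖ ≤ C := by
    intro χ
    by_cases h : χ = 1
    · subst h
      obtain ⟨C, hC⟩ := triv_prime (k := k)
      refine ⟨C, fun N => ?_⟩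
      have h1 : (1 : DirichletCharacter ℂ k) (ℓ : ZMod k)⁻¹ = 1 := by
        refine MulChar.one_apply ?_
        rw [← ZMod.coe_unitOfCoprime ℓ hgcd, ZMod.inv_coe_unit]
        exact Units.isUnit _
      simpa [h1] using hC N
    · obtain ⟨C, hC⟩ := char_prime χ h
      refine ⟨C, fun N => ?_⟩
      simp only [h, if_false, sub_zero]
      have : ∑ n ∈ Icc 1 N, (if n.Prime then χ (ℓ : ZMod k)⁻¹ * χ (n : ZMod k) * (Real.log n / n : ℝ) else 0) =
          χ (ℓ : ZMod k)⁻¹ * ∑ n ∈ Icc 1 N, if n.Prime then χ (n : ZMod k) * (Real.log n / n : ℝ) else 0 := by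
        rw [mul_sum]
        refine sum_congr rfl fun n _ => ?_
        split_ifs
        · ring
        · simp
      rw [this, norm_mul]
      exact (mul_le_of_le_one_left (norm_nonneg _) (DirichletCharacter.norm_le_one χ _)).trans (hC N)
  choose C hC using hall
  have hφ : 0 < (Nat.totient k : ℝ) := by exact_mod_cast Nat.totient_pos.2 (by omega)
  refine ⟨(∑ χ, C χ) / Nat.totient k, fun N => ?_⟩
  rw [le_div_iff₀ hφ]
  have e : ((∑ n ∈ Icc 1 N, (if n.Prime then epsRes k ℓ n * (Real.log n / n) else 0) : ℝ) : ℂ) * (Nat.totient k : ℂ)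
      = ∑ χ : DirichletCharacter ℂ k, ∑ n ∈ Icc 1 N, if n.Prime then (χ (ℓ : ZMod k)⁻¹ * χ (n : ZMod k) - (if χ = 1 then 1 else 0)) * (Real.log n / n : ℝ) else 0 := by
    rw [sum_comm]
    push_cast
    rw [sum_mul]
    refine sum_congr rfl fun n _ => ?_
    split_ifs with hp
    · rw [← sum_mul, sum_sub_distrib, DirichletCharacter.sum_char_inv_mul_char_eq ℂ hu n]
      rw [Finset.sum_ite_eq' univ 1]
      simp only [mem_univ, if_true]
      have hφ' : (Nat.totient k : ℂ) ≠ 0 := by exact_mod_cast hφ.ne'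
      have hiff : ((ℓ : ZMod k) = n) ↔ n ≡ ℓ [MOD k] := by
        rw [ZMod.natCast_eq_natCast_iff]; exact ⟨fun h => h.symm, fun h => h.symm⟩
      unfold epsRes
      by_cases h : n ≡ ℓ [MOD k]
      · rw [if_pos h, if_pos (hiff.2 h)]
        push_cast
        field_simp
      · rw [if_neg h, if_neg (fun h' => h (hiff.1 h'))]
        push_cast
        field_simp
        ring
    · simp
  have h2 : |∑ n ∈ Icc 1 N, (if n.Prime then epsRes k ℓ n * (Real.log n / n) else 0)| * (Nat.totient k : ℝ)
     = ‖((∑ n ∈ Icc 1 N, (if n.Prime then epsRes k ℓ n * (Real.log n / n) else 0) : ℝ) : ℂ) * (Nat.totient k : ℂ)‖ := by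
    rw [norm_mul, Complex.norm_real, Complex.norm_natCast, Real.norm_eq_abs]
  rw [h2, e]
  exact (norm_sum_le _ _).trans (sum_le_sum fun χ _ => hC χ N)

theorem eps_abs (k ℓ n : ℕ) (hk : 2 ≤ k) : |epsRes k ℓ n| ≤ 1 := by
  have hφ : 1 ≤ (Nat.totient k : ℝ) := by exact_mod_cast Nat.totient_pos.2 (by omega)
  have : 1 / (Nat.totient k : ℝ) ≤ 1 := by rw [div_le_one (by linarith)]; exact hφ
  have h0 : 0 ≤ 1 / (Nat.totient k : ℝ) := by positivity
  unfold epsRes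
  rw [abs_le]
  split_ifs <;> constructor <;> linarith

/-- Tail bound for `∑ ε(p)/p`. -/
theorem eps_tail (k ℓ : ℕ) (hk : 2 ≤ k) (hgcd : Nat.gcd ℓ k = 1) :
    ∃ C : ℝ, 0 ≤ C ∧ ∀ a b : ℕ, 2 ≤ a →
      |∑ n ∈ Ico a b, if n.Prime then epsRes k ℓ n * (1 / n) else 0| ≤ C / Real.log a := by
  obtain ⟨C, hC⟩ := eps_mertens k ℓ hk hgcd
  have hC0 : 0 ≤ C := (abs_nonneg _).trans (hC 0)
  refine ⟨2 * C, by linarith, fun a b ha => ?_⟩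
  have := abel_bound (fun n : ℕ => if n.Prime then epsRes k ℓ n * (Real.log n / n) else 0)
    (fun n => 1 / Real.log n) (2 * C) a b ?_ ?_ ?_
  · rw [mul_one_div, Real.norm_eq_abs] at this
    refine le_trans (le_of_eq ?_) this
    congr 1
    refine sum_congr rfl fun n hn => ?_
    simp at hn
    split_ifs
    · have : 0 < Real.log n := Real.log_pos (by exact_mod_cast (by omega : 1 < n))
      simp only [smul_eq_mul]
      field_simp
    · simp
  · intro m
    rw [Real.norm_eq_abs]
    rcases le_total m a with h | h
    · rw [Finset.Ico_eq_empty_of_le h]; simp; exact hC0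
    have e : ∀ c, 1 ≤ c → Icc 1 (c-1) = Ico 1 c := by intro c hc; ext; simp; omega
    have h1 := hC (a-1)
    have h2 := hC (m-1)
    rw [e _ (by omega)] at h1 h2
    have := Finset.sum_Ico_consecutive (fun n : ℕ => if n.Prime then epsRes k ℓ n * (Real.log n / n) else 0) (by omega : 1 ≤ a) h
    rw [abs_le] at *
    constructor <;> linarith
  · intro n hn
    have : 0 < Real.log n := Real.log_pos (by exact_mod_cast (by omega : 1 < n))
    have hn0 : (0:ℝ) < n := by exact_mod_cast (by omega : 0 < n)
    gcongr
    simp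
  · intro n hn
    positivity

def Smooth (z n : ℕ) : Prop := ∀ p, p.Prime → p ∣ n → p ≤ z

open Classical in
noncomputable def smi (z n : ℕ) : ℝ := if Smooth z n then 1 else 0

noncomputable def Psi (z : ℕ) (y : ℝ) : ℝ := ∑ n ∈ Icc 1 ⌊y⌋₊, smi z n

noncomputable def Dn (z : ℕ) (y : ℝ) : ℝ := Psi z y / y

theorem smi_nonneg (z n : ℕ) : 0 ≤ smi z n := by unfold smi; split_ifs <;> norm_num
theorem smi_le (z n : ℕ) : smi z n ≤ 1 := by unfold smi; split_ifs <;> norm_num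

theorem smooth_of_le {z n : ℕ} (h : n ≤ z) (h0 : 0 < n) : Smooth z n :=
  fun _ _ hd => (Nat.le_of_dvd h0 hd).trans h

theorem smi_mul (z a b : ℕ) : smi z (a * b) = smi z a * smi z b := by
  have : Smooth z (a*b) ↔ Smooth z a ∧ Smooth z b := by
    constructor
    · exact fun h => ⟨fun p hp hd => h p hp (hd.mul_right _), fun p hp hd => h p hp (hd.mul_left _)⟩
    · rintro ⟨h1, h2⟩ p hp hd
      rcases (Nat.Prime.dvd_mul hp).1 hd with h | h
      exacts [h1 p hp h, h2 p hp h]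
  unfold smi
  by_cases h1 : Smooth z a <;> by_cases h2 : Smooth z b <;> simp [this, h1, h2]

theorem Psi_nonneg (z y) : 0 ≤ Psi z y := sum_nonneg fun _ _ => smi_nonneg _ _

theorem Psi_le_floor (z y) : Psi z y ≤ ⌊y⌋₊ := by
  calc _ ≤ ∑ n ∈ Icc 1 ⌊y⌋₊, (1:ℝ) := sum_le_sum fun n _ => smi_le z n
    _ = _ := by simp

theorem Dn_nonneg (z y) : 0 ≤ Dn z y := by
  rcases le_total 0 y with h | h
  · exact div_nonneg (Psi_nonneg _ _) h
  · unfold Dn Psi; rw [Nat.floor_of_nonpos h]; simp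

theorem Dn_le (z y) : Dn z y ≤ 1 := by
  rcases le_or_gt y 0 with h | h
  · unfold Dn Psi; rw [Nat.floor_of_nonpos h]; simp
  · unfold Dn
    rw [div_le_one h]
    exact (Psi_le_floor z y).trans (Nat.floor_le h.le)

theorem Dn_zero (z) {y : ℝ} (h : y < 1) : Dn z y = 0 := by
  unfold Dn Psi; rw [Nat.floor_eq_zero.2 h]; simp

theorem Dn_small (z : ℕ) {y : ℝ} (h1 : 1 ≤ y) (h : y < z + 1) : |Dn z y - 1| ≤ 1 / y := by
  have e : Psi z y = ⌊y⌋₊ := by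
    unfold Psi
    have : ⌊y⌋₊ ≤ z := by
      have := (Nat.floor_lt (by linarith : 0 ≤ y)).2 (by exact_mod_cast h : y < ((z+1 : ℕ):ℝ))
      omega
    rw [sum_congr rfl (g := fun _ => (1:ℝ))]
    · simp
    · intro n hn
      simp only [mem_Icc] at hn
      unfold smi
      rw [if_pos (smooth_of_le (by omega) (by omega))]
  have hy : 0 < y := by linarith
  unfold Dn
  rw [e, div_sub_one hy.ne', abs_div, abs_of_pos hy]
  gcongr
  have := Nat.floor_le hy.le
  have := Nat.lt_floor_add_one y
  rw [abs_le]; constructor <;> linarith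

noncomputable def aw (z d : ℕ) : ℝ := smi z d * (Λ d / d)

theorem vmd_nonneg (d : ℕ) : 0 ≤ Λ d / d := div_nonneg ArithmeticFunction.vonMangoldt_nonneg (by positivity)
theorem aw_nonneg (z d) : 0 ≤ aw z d := mul_nonneg (smi_nonneg _ _) (vmd_nonneg d)
theorem aw_le (z d) : aw z d ≤ Λ d / d := mul_le_of_le_one_left (vmd_nonneg d) (smi_le z d)
theorem aw_big (z d : ℕ) (h : z < d) : aw z d ≤ if d.Prime then 0 else Λ d / d := by
  split_ifs with hp
  · unfold aw smi
    rw [if_neg]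
    · simp
    · intro hs
      have := hs d hp dvd_rfl
      omega
  · exact aw_le z d

theorem Psi_log (z : ℕ) (y : ℝ) :
    ∑ m ∈ Icc 1 ⌊y⌋₊, smi z m * Real.log m = ∑ d ∈ Icc 1 ⌊y⌋₊, smi z d * Λ d * Psi z (y / d) := by
  have := sum_Icc_dvd_swap (fun d m => Λ d * smi z (d * m)) ⌊y⌋₊
  have e1 : ∑ m ∈ Icc 1 ⌊y⌋₊, smi z m * Real.log m =
     ∑ n ∈ Icc 1 ⌊y⌋₊, ∑ d ∈ n.divisors, Λ d * smi z (d * (n / d)) := by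
    refine sum_congr rfl fun n _ => ?_
    rw [← ArithmeticFunction.vonMangoldt_sum, mul_sum]
    refine sum_congr rfl fun d hd => ?_
    rw [Nat.mul_div_cancel' (Nat.dvd_of_mem_divisors hd), mul_comm]
  rw [e1, this]
  refine sum_congr rfl fun d _ => ?_
  unfold Psi
  rw [Nat.floor_div_natCast, mul_sum]
  refine sum_congr rfl fun m _ => ?_
  rw [smi_mul]; ring

theorem Dn_log (z : ℕ) (y : ℝ) (hy : 1 ≤ y) (M : ℕ) (hM : ⌊y⌋₊ ≤ M) :
    0 ≤ Dn z y * Real.log y - ∑ d ∈ Icc 1 M, aw z d * Dn z (y / d) ∧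
    Dn z y * Real.log y - ∑ d ∈ Icc 1 M, aw z d * Dn z (y / d) ≤ 2 := by
  have hy0 : 0 < y := by linarith
  have e1 : ∑ d ∈ Icc 1 M, aw z d * Dn z (y / d) = (∑ m ∈ Icc 1 ⌊y⌋₊, smi z m * Real.log m) / y := by
    rw [Psi_log, sum_div]
    symm
    have hsub : Icc 1 ⌊y⌋₊ ⊆ Icc 1 M := Icc_subset_Icc_right hM
    rw [← sum_subset hsub]
    · refine sum_congr rfl fun d hd => ?_
      simp only [mem_Icc] at hd
      have : (0:ℝ) < d := by exact_mod_cast hd.1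
      unfold aw Dn
      field_simp
    · intro d hd hd2
      simp only [mem_Icc, not_and, not_le] at hd hd2
      have h1 := hd2 hd.1
      rw [Nat.floor_lt hy0.le] at h1
      rw [Dn_zero, mul_zero]
      rw [div_lt_one (by linarith)]
      exact h1
  have e2 : Dn z y * Real.log y - ∑ d ∈ Icc 1 M, aw z d * Dn z (y / d) =
     (∑ m ∈ Icc 1 ⌊y⌋₊, smi z m * (Real.log y - Real.log m)) / y := by
    rw [e1]
    unfold Dn Psi
    simp only [mul_sub, sum_sub_distrib]
    rw [← sum_mul]; ring
  rw [e2]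
  have hfl : 1 ≤ ⌊y⌋₊ := Nat.floor_pos.2 hy
  have hfr : (0:ℝ) < ⌊y⌋₊ := by exact_mod_cast hfl
  have hnn : ∀ m ∈ Icc 1 ⌊y⌋₊, 0 ≤ Real.log y - Real.log m := by
    intro m hm
    simp only [mem_Icc] at hm
    have : (m:ℝ) ≤ y := (Nat.le_floor_iff hy0.le).1 hm.2
    linarith [Real.log_le_log (by exact_mod_cast hm.1) this]
  constructor
  · exact div_nonneg (sum_nonneg fun m hm => mul_nonneg (smi_nonneg _ _) (hnn m hm)) hy0.le
  · rw [div_le_iff₀ hy0]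
    calc _ ≤ ∑ m ∈ Icc 1 ⌊y⌋₊, (Real.log y - Real.log m) :=
          sum_le_sum fun m hm => mul_le_of_le_one_left (hnn m hm) (smi_le _ _)
      _ = ⌊y⌋₊ * Real.log y - ∑ m ∈ Icc 1 ⌊y⌋₊, Real.log m := by
          rw [sum_sub_distrib]; simp
      _ ≤ ⌊y⌋₊ * (Real.log y - Real.log ⌊y⌋₊ + 1) := by
          have := (sum_log_bounds ⌊y⌋₊).1
          linarith
      _ ≤ ⌊y⌋₊ * 2 := by
          gcongr
          rw [← Real.log_div hy0.ne' hfr.ne']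
          have : y / ⌊y⌋₊ ≤ 2 := by
            rw [div_le_iff₀ hfr]
            have := Nat.lt_floor_add_one y
            have : (1:ℝ) ≤ ⌊y⌋₊ := by exact_mod_cast hfl
            linarith
          have := Real.log_le_sub_one_of_pos (by positivity : 0 < y / ⌊y⌋₊)
          linarith
      _ ≤ 2 * y := by linarith [Nat.floor_le hy0.le]

/-- Decay of the density of smooth numbers. -/
theorem Dn_decay : ∃ C : ℝ, 0 < C ∧ ∀ z : ℕ, 2 ≤ z → ∀ j : ℕ, ∀ y : ℝ, 0 < y →
    (2 + j) * (Real.log z + 6) ≤ Real.log y → Dn z y ≤ (1/2)^j + C / (Real.log z + 6) := by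
  obtain ⟨C0, hC0, hC⟩ := vm_nonprime
  refine ⟨C0 + 2, by linarith, fun z hz j => ?_⟩
  have hz' : (2:ℝ) ≤ z := by exact_mod_cast hz
  have hlz : 0 < Real.log z := Real.log_pos (by linarith)
  set L := Real.log z + 6 with hL
  have hL0 : 0 < L := by linarith
  induction j with
  | zero =>
    intro y _ _
    have := Dn_le z y
    have : 0 ≤ (C0+2)/L := by positivity
    simp; linarith
  | succ j ih =>
    intro y hy hlog
    have hly : 0 < Real.log y := lt_of_lt_of_le (by positivity) hlog
    have hy1 : 1 ≤ y := by
      by_contra! h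
      linarith [Real.log_neg hy h]
    set U := (1/2:ℝ)^j + (C0+2) / L with hU
    have hU0 : 0 ≤ U := by positivity
    have h2 := (Dn_log z y hy1 ⌊y⌋₊ le_rfl).2
    have h3 : ∑ d ∈ Icc 1 ⌊y⌋₊, aw z d * Dn z (y / d) ≤ L * U + C0 := by
      calc _ ≤ ∑ d ∈ Icc 1 ⌊y⌋₊, ((if d ∈ Icc 1 z then Λ d / d * U else 0) + (if d.Prime then 0 else Λ d / d)) := by
            refine sum_le_sum fun d hd => ?_
            simp only [mem_Icc] at hd
            have hnp : 0 ≤ (if d.Prime then 0 else Λ d / d : ℝ) := by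
              split_ifs
              exacts [le_rfl, vmd_nonneg d]
            by_cases hdz : d ≤ z
            · rw [if_pos (by simp; omega)]
              have hd0 : (0:ℝ) < d := by exact_mod_cast hd.1
              have : Dn z (y/d) ≤ U := by
                refine ih _ (by positivity) ?_
                rw [Real.log_div hy.ne' hd0.ne']
                have : Real.log d ≤ Real.log z := Real.log_le_log hd0 (by exact_mod_cast hdz)
                push_cast at hlog
                nlinarith
              have := mul_le_mul (aw_le z d) this (Dn_nonneg _ _) (vmd_nonneg d)
              linarith
            · rw [if_neg (by simp; omega)]
              have h1 := aw_big z d (by omega)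
              have h2 := mul_le_of_le_one_right (aw_nonneg z d) (Dn_le z (y/d))
              linarith
        _ ≤ L * U + C0 := by
            rw [sum_add_distrib]
            refine add_le_add ?_ (hC _)
            rw [← sum_filter]
            calc _ ≤ ∑ d ∈ Icc 1 z, Λ d / d * U :=
                  sum_le_sum_of_subset_of_nonneg (fun d hd => (mem_filter.1 hd).2)
                    (fun d _ _ => mul_nonneg (vmd_nonneg d) hU0)
              _ = (∑ d ∈ Icc 1 z, Λ d / d) * U := by rw [sum_mul]
              _ ≤ L * U := by
                  gcongr
                  have := abs_le.1 (mertens_vm z (by omega))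
                  linarith
    have h4 : Dn z y * Real.log y ≤ L * U + (C0 + 2) := by linarith
    have h5 : 2 * L ≤ Real.log y := by push_cast at hlog; nlinarith [(Nat.cast_nonneg j : (0:ℝ) ≤ j)]
    have h6 : Dn z y * (2 * L) ≤ L * U + (C0 + 2) :=
      (mul_le_mul_of_nonneg_left h5 (Dn_nonneg z y)).trans h4
    have h7 : Dn z y ≤ (L * U + (C0 + 2)) / (2 * L) := by rw [le_div_iff₀ (by positivity)]; exact h6
    refine h7.trans (le_of_eq ?_)
    rw [hU, pow_succ]
    field_simp
    ring

set_option maxHeartbeats 1600000 in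
theorem Dn_lip : ∃ A : ℝ, 0 < A ∧ ∀ z : ℕ, 2 ≤ z → ∀ lam : ℝ, 1 ≤ lam → lam ≤ 2 →
    ∀ y : ℝ, (z:ℝ)/2 ≤ y → |Dn z (lam * y) - Dn z y| ≤ A / Real.log z := by
  obtain ⟨C0, hC0, hC⟩ := vm_nonprime
  refine ⟨4 * (C0 + 30), by linarith, fun z hz lam hl1 hl2 => ?_⟩
  have hz' : (2:ℝ) ≤ z := by exact_mod_cast hz
  have hlz : 0 < Real.log z := Real.log_pos (by linarith)
  have htriv : ∀ y, |Dn z (lam * y) - Dn z y| ≤ 1 := by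
    intro y
    have := Dn_nonneg z (lam*y); have := Dn_nonneg z y
    have := Dn_le z (lam*y); have := Dn_le z y
    rw [abs_le]; constructor <;> linarith
  rcases lt_or_ge (Real.log z) 40 with hsm | hbig
  · intro y _
    refine (htriv y).trans ?_
    rw [le_div_iff₀ hlz]; linarith
  set δ := 4 * (C0 + 30) / Real.log z with hδ
  have hδ0 : 0 ≤ δ := by positivity
  have key : ∀ j : ℕ, ∀ y : ℝ, (z:ℝ)/2 ≤ y → y < 2^j → |Dn z (lam * y) - Dn z y| ≤ δ := by
    intro j
    induction j with
    | zero => intro y h1 h2; norm_num at h2; linarith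
    | succ j ih =>
      intro y hzy hyj
      have hy1 : 1 ≤ y := by linarith
      have hy0 : 0 < y := by linarith
      set M := ⌊2*y⌋₊ with hM
      have hfl : 1 ≤ ⌊y⌋₊ := Nat.floor_pos.2 hy1
      have hfl' : (1:ℝ) ≤ ⌊y⌋₊ := by exact_mod_cast hfl
      have hyM : ⌊y⌋₊ ≤ M := Nat.floor_le_floor (by linarith)
      have hM1 : 1 ≤ M := hfl.trans hyM
      have hMle : (M:ℝ) ≤ 2*y := Nat.floor_le (by linarith)
      have hyfl : y < ⌊y⌋₊ + 1 := Nat.lt_floor_add_one y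
      have hA := Dn_log z y hy1 M hyM
      have hB := Dn_log z (lam*y) (by nlinarith) M (Nat.floor_le_floor (by nlinarith))
      set S1 := ∑ d ∈ Icc 1 M, aw z d * Dn z (y / d)
      set S2 := ∑ d ∈ Icc 1 M, aw z d * Dn z (lam * y / d)
      have hS : |S2 - S1| ≤ δ * (Real.log y / 2 + 7) + C0 + 26 := by
        have h1 : |S2 - S1| ≤ ∑ d ∈ Icc 1 M, aw z d * |Dn z (lam * (y / d)) - Dn z (y / d)| := by
          rw [← sum_sub_distrib]
          refine (abs_sum_le_sum_abs _ _).trans (sum_le_sum fun d _ => ?_)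
          rw [← mul_sub, abs_mul, abs_of_nonneg (aw_nonneg z d), mul_div_assoc]
        refine h1.trans ?_
        calc _ ≤ ∑ d ∈ Icc 1 M, ((if d ∈ Icc 1 (Nat.sqrt M) then Λ d / d * δ else 0)
                + (if d.Prime then 0 else Λ d / d)
                + (if d ∈ Icc 1 ⌊y⌋₊ then Λ d * (2 / y) else 0)
                + (if d ∈ Ioc ⌊y⌋₊ M then Λ d / d else 0)) := by
              refine sum_le_sum fun d hd => ?_
              simp only [mem_Icc] at hd
              have hv := vmd_nonneg d
              have hv2 : 0 ≤ Λ d := ArithmeticFunction.vonMangoldt_nonneg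
              have n1 : 0 ≤ (if d ∈ Icc 1 (Nat.sqrt M) then Λ d / d * δ else 0) := by
                split_ifs <;> positivity
              have n2 : 0 ≤ (if d.Prime then 0 else Λ d / d : ℝ) := by
                split_ifs <;> positivity
              have n3 : 0 ≤ (if d ∈ Icc 1 ⌊y⌋₊ then Λ d * (2 / y) else 0) := by
                split_ifs <;> positivity
              have n4 : 0 ≤ (if d ∈ Ioc ⌊y⌋₊ M then Λ d / d else 0) := by
                split_ifs <;> positivity
              have hd0 : (0:ℝ) < d := by exact_mod_cast hd.1
              rcases eq_or_lt_of_le hd.1 with h1 | h1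
              · have : aw z d = 0 := by rw [← h1]; simp [aw]
                rw [this]; linarith
              rcases lt_or_ge z d with hdz | hdz
              · have h1 := aw_big z d hdz
                have h2 := mul_le_of_le_one_right (aw_nonneg z d) (htriv (y/d))
                linarith
              have hd2 : (2:ℝ) ≤ d := by exact_mod_cast h1
              have hdz' : (d:ℝ) ≤ z := by exact_mod_cast hdz
              rcases le_or_gt ((z:ℝ)/2) (y/d) with hc | hc
              · have h2 : d ∈ Icc 1 (Nat.sqrt M) := by
                  rw [mem_Icc, Nat.le_sqrt]
                  refine ⟨hd.1, ?_⟩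
                  rw [hM, Nat.le_floor_iff (by linarith)]
                  rw [le_div_iff₀ hd0] at hc
                  push_cast
                  nlinarith
                rw [if_pos h2]  at *
                have h3 := ih (y/d) hc (by
                  rw [div_lt_iff₀ hd0]
                  rw [pow_succ] at hyj
                  have : (0:ℝ) < 2^j := by positivity
                  nlinarith)
                have := mul_le_mul (aw_le z d) h3 (abs_nonneg _) hv
                linarith
              · rcases le_or_gt d ⌊y⌋₊ with hdy | hdy
                · have hdy' : (d:ℝ) ≤ y := (Nat.le_floor_iff hy0.le).1 hdy
                  rw [if_pos (by simp; omega : d ∈ Icc 1 ⌊y⌋₊)] at *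
                  have hv1 : 1 ≤ y/d := by rw [le_div_iff₀ hd0]; linarith
                  have b1 := abs_le.1 (Dn_small z hv1 (by linarith))
                  have b2 := abs_le.1 (Dn_small z (by nlinarith : 1 ≤ lam * (y/d)) (by nlinarith))
                  have b3 : 1/(lam * (y/d)) ≤ 1/(y/d) :=
                    one_div_le_one_div_of_le (by linarith) (by nlinarith)
                  have b4 : |Dn z (lam * (y / d)) - Dn z (y / d)| ≤ 2 * (1/(y/d)) := by
                    rw [abs_le]; constructor <;> linarith
                  have := mul_le_mul (aw_le z d) b4 (abs_nonneg _) hv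
                  have e : Λ d / d * (2 * (1/(y/d))) = Λ d * (2/y) := by field_simp
                  linarith
                · rw [if_pos (by simp; omega : d ∈ Ioc ⌊y⌋₊ M)] at *
                  have := mul_le_mul (aw_le z d) (htriv (y/d)) (abs_nonneg _) hv
                  linarith
          _ ≤ δ * (Real.log y / 2 + 7) + C0 + 12 + 14 := by
              rw [sum_add_distrib, sum_add_distrib, sum_add_distrib]
              refine add_le_add (add_le_add (add_le_add ?_ (hC _)) ?_) ?_
              · rw [← sum_filter]
                have hs1 : 1 ≤ Nat.sqrt M := by rw [Nat.le_sqrt]; omega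
                calc _ ≤ ∑ d ∈ Icc 1 (Nat.sqrt M), Λ d / d * δ :=
                      sum_le_sum_of_subset_of_nonneg (fun d hd => (mem_filter.1 hd).2)
                        (fun d _ _ => mul_nonneg (vmd_nonneg d) hδ0)
                  _ = δ * (∑ d ∈ Icc 1 (Nat.sqrt M), Λ d / d) := by rw [← sum_mul, mul_comm]
                  _ ≤ δ * (Real.log y / 2 + 7) := by
                      gcongr
                      have h1 := abs_le.1 (mertens_vm _ hs1)
                      have h2 : (Nat.sqrt M:ℝ)^2 ≤ 2*y := by
                        have : (Nat.sqrt M)^2 ≤ M := Nat.sqrt_le' M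
                        have : ((Nat.sqrt M:ℝ))^2 ≤ M := by exact_mod_cast this
                        linarith
                      have h3 := Real.log_le_log (by positivity) h2
                      rw [Real.log_pow, Real.log_mul (by norm_num) hy0.ne'] at h3
                      have := Real.log_two_lt_d9
                      push_cast at h3
                      linarith
              · rw [← sum_filter]
                calc _ ≤ ∑ d ∈ Icc 1 ⌊y⌋₊, Λ d * (2/y) :=
                      sum_le_sum_of_subset_of_nonneg (fun d hd => (mem_filter.1 hd).2)
                        (fun d _ _ => mul_nonneg ArithmeticFunction.vonMangoldt_nonneg (by positivity))
                  _ = (∑ d ∈ Icc 1 ⌊y⌋₊, Λ d) * (2/y) := by rw [← sum_mul]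
                  _ ≤ (6 * y) * (2/y) := by
                      gcongr
                      have := psi_bound ⌊y⌋₊
                      linarith [Nat.floor_le hy0.le]
                  _ = 12 := by field_simp; norm_num
              · rw [← sum_filter]
                calc _ ≤ ∑ d ∈ Ioc ⌊y⌋₊ M, Λ d / d :=
                      sum_le_sum_of_subset_of_nonneg (fun d hd => (mem_filter.1 hd).2)
                        (fun d _ _ => vmd_nonneg d)
                  _ ≤ Real.log (M/⌊y⌋₊) + 12 := vm_block _ _ hfl hyM
                  _ ≤ 14 := by
                      have h1 : (M:ℝ)/⌊y⌋₊ ≤ 2^2 := by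
                        rw [div_le_iff₀ (by linarith)]; linarith
                      have hM' : (1:ℝ) ≤ M := by exact_mod_cast hM1
                      have h3 := Real.log_le_log (by positivity) h1
                      rw [Real.log_pow] at h3
                      have := Real.log_two_lt_d9
                      push_cast at h3
                      linarith
          _ = _ := by ring
      have hlogy : Real.log z - 1 ≤ Real.log y := by
        have h3 := Real.log_le_log (by linarith) hzy
        rw [Real.log_div (by linarith) (by norm_num)] at h3
        have := Real.log_two_lt_d9
        linarith
      have hll : Real.log (lam*y) = Real.log lam + Real.log y :=
        Real.log_mul (by linarith) (by linarith)
      have hll0 : 0 ≤ Real.log lam := Real.log_nonneg hl1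
      have hll1 : Real.log lam ≤ 1 := by
        have := Real.log_le_sub_one_of_pos (by linarith : 0 < lam); linarith
      rw [hll] at hB
      have hD1 := Dn_nonneg z (lam*y)
      have hD2 := Dn_le z (lam*y)
      have hp1 : 0 ≤ Dn z (lam*y) * Real.log lam := by positivity
      have hp2 : Dn z (lam*y) * Real.log lam ≤ 1 := by nlinarith
      have hfin : |Dn z (lam * y) - Dn z y| * Real.log y ≤ δ * (Real.log y / 2 + 7) + C0 + 29 := by
        have hly : 0 ≤ Real.log y := by linarith
        have hS' := abs_le.1 hS
        rw [← abs_of_nonneg hly, ← abs_mul, abs_of_nonneg hly, abs_le, sub_mul]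
        rw [mul_add] at hB
        constructor <;> linarith [hB.1, hB.2, hA.1, hA.2]
      have hle : δ * (Real.log y / 2 + 7) + C0 + 29 ≤ δ * Real.log y := by
        have h1 : δ * Real.log z = 4 * (C0 + 30) := by rw [hδ]; field_simp
        have h2 : Real.log z / 4 ≤ Real.log y / 2 - 7 := by linarith
        have := mul_le_mul_of_nonneg_left h2 hδ0
        linarith
      exact le_of_mul_le_mul_right (hfin.trans hle) (by linarith)
  intro y hy
  obtain ⟨j, hj⟩ := pow_unbounded_of_one_lt y (by norm_num : (1:ℝ) < 2)
  exact key j y hy hj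

theorem Dn_lip' : ∃ A : ℝ, 0 < A ∧ ∀ z : ℕ, 2 ≤ z → ∀ lam : ℝ, 1 ≤ lam → lam ≤ 2 →
    ∀ v : ℝ, 1 ≤ v → |Dn z (lam * v) - Dn z v| ≤ A / Real.log z + 2 / v := by
  obtain ⟨A, hA0, hA⟩ := Dn_lip
  refine ⟨A, hA0, fun z hz lam hl1 hl2 v hv => ?_⟩
  have hz' : (2:ℝ) ≤ z := by exact_mod_cast hz
  have hlz : 0 < Real.log z := Real.log_pos (by linarith)
  rcases le_or_gt ((z:ℝ)/2) v with h | h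
  · have := hA z hz lam hl1 hl2 v h
    have : 0 < 2 / v := by positivity
    linarith
  · have b1 := abs_le.1 (Dn_small z hv (by linarith))
    have b2 := abs_le.1 (Dn_small z (by nlinarith : 1 ≤ lam * v) (by nlinarith))
    have b3 : 1/(lam * v) ≤ 1/v :=
      one_div_le_one_div_of_le (by linarith) (by nlinarith)
    have b4 : |Dn z (lam * v) - Dn z v| ≤ 2 * (1/v) := by
      rw [abs_le]; constructor <;> linarith
    have : 0 < A / Real.log z := by positivity
    have : 2 * (1/v) = 2 / v := by ring
    linarith

/-- Prime block bound. -/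
theorem prime_Ioc (a b : ℕ) (ha : 2 ≤ a) (hab : a ≤ b) (hb : b ≤ 2 * a) :
    ∑ n ∈ Ioc a b, (if n.Prime then 1 / (n:ℝ) else 0) ≤ 13 / Real.log a := by
  have ha' : (2:ℝ) ≤ a := by exact_mod_cast ha
  have hl : 0 < Real.log a := Real.log_pos (by linarith)
  rw [le_div_iff₀ hl, sum_mul]
  calc _ ≤ ∑ n ∈ Ioc a b, Λ n / n := by
        refine sum_le_sum fun n hn => ?_
        simp only [mem_Ioc] at hn
        split_ifs with hp
        · rw [ArithmeticFunction.vonMangoldt_apply_prime hp, one_div_mul_eq_div]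
          gcongr
          exact hn.1.le
        · simpa using vmd_nonneg n
    _ ≤ Real.log (b/a) + 12 := vm_block a b (by omega) hab
    _ ≤ 13 := by
        have h1 : (b:ℝ)/a ≤ 2 := by
          rw [div_le_iff₀ (by linarith)]; exact_mod_cast hb
        have hb' : (0:ℝ) < b := by exact_mod_cast (by omega : 0 < b)
        have h3 := Real.log_le_log (by positivity) h1
        have := Real.log_two_lt_d9
        linarith

theorem log_two_pow_ge (i : ℕ) : 0.69 * (i:ℝ) ≤ Real.log ((2^i : ℕ):ℝ) := by
  push_cast
  rw [Real.log_pow]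
  have := Real.log_two_gt_d9
  nlinarith [(Nat.cast_nonneg i : (0:ℝ) ≤ i)]

theorem prime_block (i : ℕ) (hi : 1 ≤ i) :
    ∑ n ∈ Ico ((2:ℕ)^i) (2^(i+1)), (if n.Prime then 1 / (n:ℝ) else 0) ≤ 21 / i := by
  have h2 : 2 ≤ 2^i := by
    calc 2 = 2^1 := rfl
      _ ≤ 2^i := Nat.pow_le_pow_right (by norm_num) hi
  have hi' : (1:ℝ) ≤ i := by exact_mod_cast hi
  have hl := log_two_pow_ge i
  have h1 := prime_Ioc (2^i) (2^(i+1)) h2 (by rw [pow_succ]; omega) (by rw [pow_succ]; omega)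
  have hnn : ∀ n : ℕ, 0 ≤ (if n.Prime then 1 / (n:ℝ) else 0) := by
    intro n; split_ifs <;> positivity
  have h3 : ∑ n ∈ Ico ((2:ℕ)^i) (2^(i+1)), (if n.Prime then 1 / (n:ℝ) else 0) ≤
      (if (2^i).Prime then 1 / ((2^i:ℕ):ℝ) else 0) + ∑ n ∈ Ioc ((2:ℕ)^i) (2^(i+1)), (if n.Prime then 1 / (n:ℝ) else 0) := by
    rw [← sum_insert (f := fun n : ℕ => (if n.Prime then 1 / (n:ℝ) else 0)) (by simp)]
    refine sum_le_sum_of_subset_of_nonneg ?_ (fun n _ _ => hnn n)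
    intro n hn
    simp only [mem_Ico, mem_insert, mem_Ioc] at hn ⊢
    omega
  have h4 : (if (2^i).Prime then 1 / ((2^i:ℕ):ℝ) else 0) ≤ 1 / Real.log ((2^i:ℕ):ℝ) := by
    have h2' : (2:ℝ) ≤ ((2^i:ℕ):ℝ) := by exact_mod_cast h2
    have hpos : 0 < Real.log ((2^i:ℕ):ℝ) := Real.log_pos (by linarith)
    split_ifs
    · refine one_div_le_one_div_of_le hpos ?_
      have := Real.log_le_sub_one_of_pos (by linarith : 0 < ((2^i:ℕ):ℝ))
      linarith
    · positivity
  have h5 : 14 / Real.log ((2^i:ℕ):ℝ) ≤ 21 / i := by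
    rw [div_le_div_iff₀ (by linarith) (by linarith)]
    linarith
  have h6 : 1 / Real.log ((2^i:ℕ):ℝ) + 13 / Real.log ((2^i:ℕ):ℝ) = 14 / Real.log ((2^i:ℕ):ℝ) := by ring
  linarith

theorem sum_mult (p N : ℕ) (hp : 0 < p) (f : ℕ → ℝ) :
    ∑ m ∈ Icc 1 (N/p), f m = ∑ n ∈ Icc 1 N, if p ∣ n then f (n/p) else 0 := by
  rw [← sum_filter]
  refine sum_bij (fun m _ => p * m) ?_ ?_ ?_ ?_
  · intro m hm
    simp only [mem_Icc, mem_filter] at hm ⊢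
    refine ⟨⟨Nat.mul_pos hp (by omega), ?_⟩, dvd_mul_right _ _⟩
    rw [mul_comm]; exact (Nat.le_div_iff_mul_le hp).1 hm.2
  · intro a _ b _ h
    exact Nat.eq_of_mul_eq_mul_left hp h
  · intro n hn
    simp only [mem_Icc, mem_filter] at hn
    obtain ⟨m, rfl⟩ := hn.2
    refine ⟨m, ?_, rfl⟩
    rw [mem_Icc]
    constructor
    · rcases Nat.eq_zero_or_pos m with h | h
      · subst h; simp at hn
      · exact h
    · rw [Nat.le_div_iff_mul_le hp, mul_comm]; exact hn.1.2
  · intro m _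
    rw [Nat.mul_div_cancel_left _ hp]

theorem smi_mono {z z' n : ℕ} (h : z ≤ z') : smi z n ≤ smi z' n := by
  by_cases h1 : Smooth z n
  · have h2 : Smooth z' n := fun p hp hd => (h1 p hp hd).trans h
    unfold smi; rw [if_pos h1, if_pos h2]
  · have : smi z n = 0 := by unfold smi; rw [if_neg h1]
    rw [this]; exact smi_nonneg _ _

theorem Dn_mono {z z' : ℕ} (h : z ≤ z') {y : ℝ} (hy : 0 < y) : Dn z y ≤ Dn z' y := by
  unfold Dn Psi
  gcongr
  exact smi_mono h

theorem Dn_shift (z z' : ℕ) (hz : 2 ≤ z) (h1 : z ≤ z') (h2 : z' ≤ 2 * z) (y : ℝ) (hy : 0 < y) :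
    |Dn z' y - Dn z y| ≤ 13 / Real.log z := by
  rw [abs_of_nonneg (by linarith [Dn_mono h1 hy])]
  refine le_trans ?_ (prime_Ioc z z' hz h1 h2)
  unfold Dn
  rw [← sub_div, div_le_iff₀ hy]
  unfold Psi
  rw [← sum_sub_distrib]
  calc _ ≤ ∑ n ∈ Icc 1 ⌊y⌋₊, ∑ p ∈ Ioc z z', (if p.Prime then (if p ∣ n then 1 else 0) else 0 : ℝ) := by
        refine sum_le_sum fun n _ => ?_
        have hnn : ∀ p ∈ Ioc z z', 0 ≤ (if p.Prime then (if p ∣ n then 1 else 0) else 0 : ℝ) := by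
          intro p _; split_ifs <;> norm_num
        by_cases ha : Smooth z n
        · have : smi z n = 1 := by unfold smi; rw [if_pos ha]
          have := smi_le z' n
          have := sum_nonneg hnn
          linarith
        by_cases hb : Smooth z' n
        · unfold Smooth at ha
          push Not at ha
          obtain ⟨p, hp, hpn, hpz⟩ := ha
          have hmem : p ∈ Ioc z z' := by rw [mem_Ioc]; exact ⟨hpz, hb p hp hpn⟩
          have := single_le_sum hnn hmem
          rw [if_pos hp, if_pos hpn] at this
          have := smi_le z' n
          have := smi_nonneg z n
          linarith
        · have e : smi z' n = 0 := by unfold smi; rw [if_neg hb]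
          have := smi_nonneg z n
          have := sum_nonneg hnn
          linarith
    _ = ∑ p ∈ Ioc z z', ∑ n ∈ Icc 1 ⌊y⌋₊, (if p.Prime then (if p ∣ n then 1 else 0) else 0 : ℝ) := sum_comm
    _ ≤ ∑ p ∈ Ioc z z', (if p.Prime then 1 / (p:ℝ) else 0) * y := by
        refine sum_le_sum fun p hp => ?_
        simp only [mem_Ioc] at hp
        split_ifs with hpp
        · rw [← sum_mult p ⌊y⌋₊ (by omega) (fun _ => 1)]
          simp only [sum_const, Nat.card_Icc, nsmul_eq_mul, mul_one, Nat.add_sub_cancel]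
          rw [one_div_mul_eq_div, ← Nat.floor_div_natCast]
          exact Nat.floor_le (by positivity)
        · simp
    _ = _ := by rw [sum_mul]

theorem Psi_div (p : ℕ) (w : ℝ) (hp : 0 < p) :
    Psi p (w/p) = ∑ n ∈ Icc 1 ⌊w⌋₊, if p ∣ n then smi p (n/p) else 0 := by
  unfold Psi
  rw [Nat.floor_div_natCast, sum_mult p _ hp]

theorem smi_ne_zero {z n : ℕ} (h : smi z n ≠ 0) : Smooth z n := by
  by_contra h1
  exact h (by unfold smi; rw [if_neg h1])

theorem Psi_swap (s : Finset ℕ) (Z : ℕ) (hs : ∀ p ∈ s, p.Prime ∧ p ≤ Z) (w : ℝ) :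
    ∑ p ∈ s, Psi p (w/p) ≤ Psi Z w := by
  rw [sum_congr rfl fun p hp => Psi_div p w (hs p hp).1.pos, sum_comm]
  unfold Psi
  refine sum_le_sum fun n _ => ?_
  by_cases h : ∃ p ∈ s, (if p ∣ n then smi p (n/p) else 0) ≠ 0
  · obtain ⟨p, hps, hp⟩ := h
    have hsm : ∀ q, q.Prime → (if q ∣ n then smi q (n/q) else 0) ≠ 0 → q ∣ n ∧ Smooth q n := by
      intro q hq h
      have hqn : q ∣ n := by by_contra h1; simp [h1] at h
      rw [if_pos hqn] at h
      refine ⟨hqn, fun r hr hrn => ?_⟩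
      rw [← Nat.div_mul_cancel hqn] at hrn
      rcases (Nat.Prime.dvd_mul hr).1 hrn with h1 | h1
      · exact smi_ne_zero h r hr h1
      · exact Nat.le_of_dvd hq.pos h1
    rw [sum_eq_single_of_mem p hps]
    · have h1 := hsm p (hs p hps).1 hp
      have h2 : smi Z n = 1 := by
        unfold smi; rw [if_pos]
        exact fun r hr hd => (h1.2 r hr hd).trans (hs p hps).2
      rw [h2, if_pos h1.1]; exact smi_le _ _
    · intro q hqs hqp
      by_contra h2
      have h3 := hsm q (hs q hqs).1 h2
      have h1 := hsm p (hs p hps).1 hp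
      exact hqp (le_antisymm (h1.2 q (hs q hqs).1 h3.1) (h3.2 p (hs p hps).1 h1.1))
  · push Not at h
    rw [sum_eq_zero h]; exact smi_nonneg _ _

theorem abel_tail (e K r V : ℕ → ℝ) (b : ℕ) :
    ∀ n a : ℕ, a + n = b → (∀ i, a ≤ i → |∑ j ∈ Ico i b, e j| ≤ r i) →
    (∀ i, a + 1 ≤ i → i < b → |K i - K (i-1)| ≤ V i) →
    |∑ i ∈ Ico a b, e i * K i - (∑ j ∈ Ico a b, e j) * K a| ≤ ∑ i ∈ Ico (a+1) b, r i * V i := by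
  intro n
  induction n with
  | zero => intro a hab _ _; subst hab; simp
  | succ n ih =>
    intro a hab hr hV
    have h1 := ih (a+1) (by omega) (fun i hi => hr i (by omega)) (fun i hi hb => hV i (by omega) hb)
    have e1 : ∑ i ∈ Ico a b, e i * K i = e a * K a + ∑ i ∈ Ico (a+1) b, e i * K i :=
      sum_eq_sum_Ico_succ_bot (by omega) _
    have e2 : ∑ i ∈ Ico a b, e i = e a + ∑ i ∈ Ico (a+1) b, e i :=
      sum_eq_sum_Ico_succ_bot (by omega) _
    rw [e1, e2]
    rcases eq_or_lt_of_le (by omega : a + 1 ≤ b) with h | h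
    · subst h; simp
    · rw [sum_eq_sum_Ico_succ_bot h (fun i => r i * V i)]
      set R := ∑ i ∈ Ico (a+1) b, e i with hR
      set T := ∑ i ∈ Ico (a+1) b, e i * K i
      have h2 : |R * (K (a+1) - K a)| ≤ r (a+1) * V (a+1) := by
        rw [abs_mul]
        exact mul_le_mul (hr (a+1) (by omega)) (hV (a+1) le_rfl h) (abs_nonneg _)
          ((abs_nonneg _).trans (hr (a+1) (by omega)))
      have h3 : e a * K a + T - (e a + R) * K a = (T - R * K (a+1)) + R * (K (a+1) - K a) := by ring
      rw [h3]
      exact (abs_add_le _ _).trans (by linarith)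

theorem sum_dyadic (f : ℕ → ℝ) (a b : ℕ) (hab : a ≤ b) :
    ∑ n ∈ Ico ((2:ℕ)^a) (2^b), f n = ∑ i ∈ Ico a b, ∑ n ∈ Ico ((2:ℕ)^i) (2^(i+1)), f n := by
  induction b, hab using Nat.le_induction with
  | base => simp
  | succ b hb ih =>
    rw [sum_Ico_succ_top hb, ← ih, sum_Ico_consecutive]
    · exact Nat.pow_le_pow_right (by norm_num) hb
    · exact Nat.pow_le_pow_right (by norm_num) (by omega)

theorem sum_inv_sq (a b : ℕ) (ha : 1 ≤ a) (hab : a ≤ b) :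
    ∑ i ∈ Ico a b, 1 / (i:ℝ)^2 ≤ 2 / (a:ℝ) - 2 / (b:ℝ) := by
  induction b, hab using Nat.le_induction with
  | base => simp
  | succ b hb ih =>
    rw [sum_Ico_succ_top hb]
    have hb' : (1:ℝ) ≤ b := by exact_mod_cast (ha.trans hb)
    have : 1 / (b:ℝ)^2 ≤ 2 / b - 2 / ((b+1 : ℕ):ℝ) := by
      push_cast
      rw [div_sub_div _ _ (by linarith) (by linarith), div_le_div_iff₀ (by positivity) (by positivity)]
      nlinarith
    linarith

theorem sum_two_pow (a b : ℕ) : ∑ i ∈ Ico a b, (2:ℝ)^i ≤ 2^b := by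
  induction b with
  | zero => simp
  | succ b ih =>
    rcases le_or_gt a b with h | h
    · rw [sum_Ico_succ_top h, pow_succ]; linarith
    · rw [Ico_eq_empty (by omega)]; simp

noncomputable def fe (k ℓ p : ℕ) : ℝ := if p.Prime then epsRes k ℓ p * (1 / (p:ℝ)) else 0

theorem fe_abs (k ℓ p : ℕ) (hk : 2 ≤ k) : |fe k ℓ p| ≤ if p.Prime then 1 / (p:ℝ) else 0 := by
  unfold fe
  split_ifs
  · rw [abs_mul, abs_of_nonneg (by positivity : 0 ≤ 1 / (p:ℝ))]
    exact mul_le_of_le_one_left (by positivity) (eps_abs k ℓ p hk)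
  · simp

theorem Ssmall (k ℓ : ℕ) (hk : 2 ≤ k) (i0 : ℕ) (w : ℝ) (hw : 1 ≤ w) (F : ℕ → ℝ)
    (hF : ∀ p, |F p| ≤ |fe k ℓ p|) :
    |∑ p ∈ range (2^i0), F p * Dn p (w/p)| ≤ Dn (2^i0) w := by
  have h1 : |∑ p ∈ range (2^i0), F p * Dn p (w/p)| ≤
      ∑ p ∈ range (2^i0), if p.Prime then Psi p (w/p) / w else 0 := by
    refine (abs_sum_le_sum_abs _ _).trans (sum_le_sum fun p _ => ?_)
    rw [abs_mul, abs_of_nonneg (Dn_nonneg p _)]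
    have := (hF p).trans (fe_abs k ℓ p hk)
    refine (mul_le_mul_of_nonneg_right this (Dn_nonneg p _)).trans ?_
    split_ifs with hp
    · have : (0:ℝ) < p := by exact_mod_cast hp.pos
      unfold Dn
      apply le_of_eq
      field_simp
    · simp
  refine h1.trans ?_
  rw [← sum_filter, ← sum_div]
  unfold Dn
  gcongr
  refine Psi_swap _ _ ?_ w
  intro p hp
  simp only [mem_filter, mem_range] at hp
  exact ⟨hp.2, hp.1.le⟩

theorem K_var : ∃ B : ℝ, 0 < B ∧ ∀ w : ℝ, 1 ≤ w → ∀ i : ℕ, 1 ≤ i → (2:ℝ)^i ≤ w →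
    (∀ p : ℕ, p ∈ Ico (2^i) (2^(i+1)) → |Dn p (w/p) - Dn (2^i) (w/2^i)| ≤ B / i + 4 * 2^i / w) ∧
    (2 ≤ i → |Dn (2^i) (w/2^i) - Dn (2^(i-1)) (w/2^(i-1))| ≤ B / i + 4 * 2^i / w) := by
  obtain ⟨A, hA0, hA⟩ := Dn_lip'
  refine ⟨4 * (A + 13), by linarith, fun w hw i hi hiw => ?_⟩
  have hi' : (1:ℝ) ≤ i := by exact_mod_cast hi
  have hw0 : 0 < w := by linarith
  have h2i : (0:ℝ) < 2^i := by positivity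
  constructor
  · intro p hp
    simp only [mem_Ico] at hp
    have hz2 : 2 ≤ 2^i := by
      calc 2 = 2^1 := rfl
        _ ≤ 2^i := Nat.pow_le_pow_right (by norm_num) hi
    have hp1 : (2:ℝ)^i ≤ p := by exact_mod_cast hp.1
    have hp2 : (p:ℝ) ≤ 2 * 2^i := by
      have : p ≤ 2 * 2^i := by have := hp.2; rw [pow_succ] at this; omega
      exact_mod_cast this
    have hp0 : (0:ℝ) < p := by linarith
    rcases le_or_gt (p:ℝ) w with hpw | hpw
    · have a1 := Dn_shift (2^i) p hz2 hp.1 (by have := hp.2; rw [pow_succ] at this; omega) (w/p) (by positivity)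
      have a2 := hA (2^i) hz2 (p/2^i) (by rw [le_div_iff₀ h2i]; linarith) (by rw [div_le_iff₀ h2i]; linarith)
        (w/p) (by rw [le_div_iff₀ hp0]; linarith)
      have e1 : (p:ℝ)/2^i * (w/p) = w/2^i := by field_simp
      rw [e1] at a2
      have hl := log_two_pow_ge i
      have a3 : (A+13) / Real.log ((2^i:ℕ):ℝ) ≤ 4 * (A+13) / i := by
        rw [div_le_div_iff₀ (by linarith) (by linarith)]
        nlinarith
      have a4 : 2 / (w/p) ≤ 4 * 2^i / w := by
        rw [div_div_eq_mul_div]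
        refine div_le_div_of_nonneg_right ?_ hw0.le
        linarith
      have a5 : (A+13) / Real.log ((2^i:ℕ):ℝ) = A / Real.log ((2^i:ℕ):ℝ) + 13 / Real.log ((2^i:ℕ):ℝ) := by ring
      rw [abs_sub_comm] at a2
      have := abs_sub_le (Dn p (w/p)) (Dn (2^i) (w/p)) (Dn (2^i) (w/2^i))
      linarith
    · rw [Dn_zero p (by rw [div_lt_one hp0]; exact hpw), zero_sub, abs_neg, abs_of_nonneg (Dn_nonneg _ _)]
      have := Dn_le (2^i) (w/2^i)
      have h1 : 1 ≤ 4 * 2^i / w := by rw [le_div_iff₀ hw0]; linarith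
      have : 0 ≤ 4 * (A+13) / i := by positivity
      linarith
  · intro hi2
    obtain ⟨j, rfl⟩ : ∃ j, i = j + 1 := ⟨i-1, by omega⟩
    have hj : 1 ≤ j := by omega
    simp only [Nat.add_sub_cancel]
    have hz2 : 2 ≤ 2^j := by
      calc 2 = 2^1 := rfl
        _ ≤ 2^j := Nat.pow_le_pow_right (by norm_num) hj
    have a1 := Dn_shift (2^j) (2^(j+1)) hz2 (by rw [pow_succ]; omega) (by rw [pow_succ]; omega) (w/2^(j+1)) (by positivity)
    have a2 := hA (2^j) hz2 2 (by norm_num) le_rfl (w/2^(j+1)) (by rw [le_div_iff₀ h2i]; linarith)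
    have e1 : 2 * (w/2^(j+1)) = w/2^j := by rw [pow_succ]; field_simp
    rw [e1] at a2
    have hl := log_two_pow_ge j
    have hj' : (1:ℝ) ≤ j := by exact_mod_cast hj
    have a3 : (A+13) / Real.log ((2^j:ℕ):ℝ) ≤ 4 * (A+13) / ((j+1:ℕ):ℝ) := by
      push_cast at hl ⊢
      rw [div_le_div_iff₀ (by linarith) (by linarith)]
      nlinarith
    have a4 : 2 / (w/2^(j+1)) ≤ 4 * 2^(j+1) / w := by
      rw [div_div_eq_mul_div]
      gcongr
      norm_num
    have a5 : (A+13) / Real.log ((2^j:ℕ):ℝ) = A / Real.log ((2^j:ℕ):ℝ) + 13 / Real.log ((2^j:ℕ):ℝ) := by ring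
    rw [abs_sub_comm] at a2
    have := abs_sub_le (Dn (2^(j+1)) (w/2^(j+1))) (Dn (2^j) (w/2^(j+1))) (Dn (2^j) (w/2^j))
    linarith

theorem S_bound (k ℓ : ℕ) (hk : 2 ≤ k) (hgcd : Nat.gcd ℓ k = 1) : ∃ C : ℝ, 0 < C ∧ ∀ T i0 : ℕ, 1 ≤ i0 →
    ∀ w : ℝ, 1 ≤ w → |∑ p ∈ range T, fe k ℓ p * Dn p (w/p)| ≤ C / i0 + Dn (2^i0) w := by
  obtain ⟨Ct, hCt0, hCt⟩ := eps_tail k ℓ hk hgcd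
  obtain ⟨B, hB0, hB⟩ := K_var
  set c := 2 * Ct with hc
  have hc0 : 0 ≤ c := by positivity
  refine ⟨c + (c + 21) * (2 * B + 8), by positivity, fun T i0 hi0 w hw => ?_⟩
  have hw0 : 0 < w := by linarith
  have hi0' : (1:ℝ) ≤ i0 := by exact_mod_cast hi0
  set F : ℕ → ℝ := fun p => if p < T then fe k ℓ p else 0 with hF
  have hFabs : ∀ p, |F p| ≤ |fe k ℓ p| := by
    intro p; simp only [hF]; split_ifs <;> simp
  set I := Nat.log 2 ⌊w⌋₊ with hI
  have hfl : ⌊w⌋₊ ≠ 0 := (Nat.floor_pos.2 hw).ne'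
  have hI1 : (2:ℝ)^I ≤ w := by
    have := Nat.pow_log_le_self 2 hfl
    have : ((2^I : ℕ):ℝ) ≤ w := (Nat.le_floor_iff hw0.le).1 this
    exact_mod_cast this
  have hI2 : w < (2:ℝ)^(I+1) := by
    have := Nat.lt_pow_succ_log_self (by norm_num : 1 < 2) ⌊w⌋₊
    have : w < ((2^(I+1) : ℕ):ℝ) := (Nat.floor_lt hw0.le).1 this
    exact_mod_cast this
  set b := max (I+1) i0 with hb
  have hib : i0 ≤ b := le_max_right _ _
  have hbI : ∀ i, i0 ≤ i → i < b → (2:ℝ)^i ≤ w := by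
    intro i h1 h2
    refine le_trans (pow_le_pow_right₀ (by norm_num) ?_) hI1
    omega
  have e0 : ∑ p ∈ range T, fe k ℓ p * Dn p (w/p) = ∑ p ∈ range (2^b), F p * Dn p (w/p) := by
    trans ∑ p ∈ range (max T (2^b)), F p * Dn p (w/p)
    · rw [← sum_subset (range_subset_range.2 (le_max_left T (2^b)))]
      · refine sum_congr rfl fun p hp => ?_
        simp only [hF]; rw [if_pos (mem_range.1 hp)]
      · intro p _ h2
        simp only [hF]; rw [if_neg (by simpa using h2), zero_mul]
    · symm
      refine sum_subset (range_subset_range.2 (le_max_right T (2^b))) ?_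
      intro p _ h2
      rw [mem_range, not_lt] at h2
      have h3 : w < p := by
        have h4 : (2:ℝ)^(I+1) ≤ 2^b := pow_le_pow_right₀ (by norm_num) (le_max_left _ _)
        have h5 : (2:ℝ)^b ≤ p := by exact_mod_cast h2
        linarith
      rw [Dn_zero, mul_zero]
      rw [div_lt_one (by linarith)]; exact h3
  have h2mono : (2:ℕ)^i0 ≤ 2^b := Nat.pow_le_pow_right (by norm_num) hib
  have e1 : ∑ p ∈ range (2^b), F p * Dn p (w/p) =
      ∑ p ∈ range (2^i0), F p * Dn p (w/p) + ∑ p ∈ Ico ((2:ℕ)^i0) (2^b), F p * Dn p (w/p) :=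
    (sum_range_add_sum_Ico _ h2mono).symm
  set e : ℕ → ℝ := fun i => ∑ p ∈ Ico ((2:ℕ)^i) (2^(i+1)), F p with he
  set K : ℕ → ℝ := fun i => Dn (2^i) (w/2^i) with hK
  set V : ℕ → ℝ := fun i => B / i + 4 * 2^i / w with hV
  have hV0 : ∀ i, 0 ≤ V i := fun i => by simp only [hV]; positivity
  have e2 : ∑ p ∈ Ico ((2:ℕ)^i0) (2^b), F p * Dn p (w/p) =
      ∑ i ∈ Ico i0 b, e i * K i +
      ∑ i ∈ Ico i0 b, ∑ p ∈ Ico ((2:ℕ)^i) (2^(i+1)), F p * (Dn p (w/p) - K i) := by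
    rw [sum_dyadic _ _ _ hib, ← sum_add_distrib]
    refine sum_congr rfl fun i _ => ?_
    simp only [he]
    rw [sum_mul, ← sum_add_distrib]
    refine sum_congr rfl fun p _ => by ring
  have hR : ∀ i, i0 ≤ i → |∑ j ∈ Ico i b, e j| ≤ c / i := by
    intro i hi
    have hii : (1:ℝ) ≤ i := by exact_mod_cast (hi0.trans hi)
    rcases le_or_gt i b with h | h
    · simp only [he]
      rw [← sum_dyadic _ _ _ h]
      have h1 : ∑ n ∈ Ico ((2:ℕ)^i) (2^b), F n = ∑ n ∈ Ico ((2:ℕ)^i) (min T (2^b)), fe k ℓ n := by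
        simp only [hF]
        rw [← sum_filter]
        refine sum_congr ?_ fun _ _ => rfl
        ext n; simp only [mem_filter, mem_Ico]; omega
      rw [h1]
      have h2 : 2 ≤ 2^i := by
        calc 2 = 2^1 := rfl
          _ ≤ 2^i := Nat.pow_le_pow_right (by norm_num) (hi0.trans hi)
      refine (hCt (2^i) (min T (2^b)) h2).trans ?_
      have hl := log_two_pow_ge i
      rw [div_le_div_iff₀ (by linarith) (by linarith)]
      nlinarith
    · rw [Ico_eq_empty (by omega)]; simp; positivity
  have hab := abel_tail e K (fun i => c / i) V b (b - i0) i0 (by omega) hR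
    (fun i h1 h2 => (hB w hw i (by omega) (hbI i (by omega) h2)).2 (by omega))
  have hsumV : ∑ i ∈ Ico i0 b, (1/(i:ℝ)) * V i ≤ (2 * B + 8) / i0 := by
    have t1 : ∑ i ∈ Ico i0 b, (1/(i:ℝ)) * V i ≤ ∑ i ∈ Ico i0 b, (B * (1 / (i:ℝ)^2) + (4 / (i0 * w)) * 2^i) := by
      refine sum_le_sum fun i hi => ?_
      simp only [mem_Ico] at hi
      have h1 : (i0:ℝ) ≤ i := by exact_mod_cast hi.1
      have h2 : 1/(i:ℝ) ≤ 1/i0 := one_div_le_one_div_of_le (by linarith) h1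
      simp only [hV]
      have h3 : 1/(i:ℝ) * (4 * 2^i / w) ≤ 1/i0 * (4 * 2^i / w) := by gcongr
      have h4 : (1:ℝ)/i0 * (4 * 2^i / w) = (4 / (i0 * w)) * 2^i := by field_simp
      have h5 : 1/(i:ℝ) * (B/i) = B * (1 / (i:ℝ)^2) := by field_simp
      rw [mul_add]; linarith
    refine t1.trans ?_
    rw [sum_add_distrib, ← mul_sum, ← mul_sum, add_div]
    have u1 := sum_inv_sq i0 b hi0 hib
    have u2 : ∑ i ∈ Ico i0 b, (2:ℝ)^i ≤ 2 * w := by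
      rcases le_or_gt (I+1) i0 with h | h
      · have : b = i0 := by omega
        rw [this]; simp; linarith
      · have : b = I+1 := by omega
        rw [this]
        refine (sum_two_pow i0 (I+1)).trans ?_
        rw [pow_succ]; linarith
    have u3 : (0:ℝ) ≤ 2 / b := by positivity
    refine add_le_add ?_ ?_
    · calc B * _ ≤ B * (2 / i0) := by gcongr; linarith
        _ = _ := by ring
    · calc _ ≤ (4 / (i0 * w)) * (2 * w) := by gcongr
        _ = _ := by field_simp; norm_num
  have hm2 : ∑ i ∈ Ico (i0+1) b, c / i * V i ≤ c * ((2*B+8)/i0) := by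
    calc _ ≤ ∑ i ∈ Ico i0 b, c / i * V i :=
          sum_le_sum_of_subset_of_nonneg (Ico_subset_Ico_left (by omega))
            (fun i _ _ => mul_nonneg (by positivity) (hV0 i))
      _ = c * ∑ i ∈ Ico i0 b, (1/(i:ℝ)) * V i := by
          rw [mul_sum]; refine sum_congr rfl fun i _ => by ring
      _ ≤ _ := by gcongr
  have herr : |∑ i ∈ Ico i0 b, ∑ p ∈ Ico ((2:ℕ)^i) (2^(i+1)), F p * (Dn p (w/p) - K i)| ≤ 21 * ((2*B+8)/i0) := by
    calc _ ≤ ∑ i ∈ Ico i0 b, (21 / (i:ℝ)) * V i := by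
          refine (abs_sum_le_sum_abs _ _).trans (sum_le_sum fun i hi => ?_)
          simp only [mem_Ico] at hi
          refine (abs_sum_le_sum_abs _ _).trans ?_
          calc _ ≤ ∑ p ∈ Ico ((2:ℕ)^i) (2^(i+1)), (if p.Prime then 1 / (p:ℝ) else 0) * V i := by
                refine sum_le_sum fun p hp => ?_
                rw [abs_mul]
                refine mul_le_mul ((hFabs p).trans (fe_abs k ℓ p hk)) ?_ (abs_nonneg _) ?_
                · exact (hB w hw i (by omega) (hbI i hi.1 hi.2)).1 p hp
                · split_ifs <;> positivity
            _ = (∑ p ∈ Ico ((2:ℕ)^i) (2^(i+1)), (if p.Prime then 1 / (p:ℝ) else 0)) * V i := by rw [sum_mul]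
            _ ≤ _ := mul_le_mul_of_nonneg_right (prime_block i (by omega)) (hV0 i)
      _ = 21 * ∑ i ∈ Ico i0 b, (1/(i:ℝ)) * V i := by
          rw [mul_sum]; refine sum_congr rfl fun i _ => by ring
      _ ≤ _ := by gcongr
  have hRK : |(∑ j ∈ Ico i0 b, e j) * K i0| ≤ c / i0 := by
    rw [abs_mul]
    calc _ ≤ (c / i0) * 1 := by
          refine mul_le_mul (hR i0 le_rfl) ?_ (abs_nonneg _) (by positivity)
          simp only [hK]
          rw [abs_of_nonneg (Dn_nonneg _ _)]; exact Dn_le _ _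
      _ = _ := mul_one _
  have hsm := Ssmall k ℓ hk i0 w hw F hFabs
  rw [e0, e1, e2]
  have efin : (c + (c + 21) * (2 * B + 8)) / i0 = c / i0 + c * ((2*B+8)/i0) + 21 * ((2*B+8)/i0) := by ring
  rw [efin]
  have q1 := abs_le.1 hsm
  have q2 := abs_le.1 hRK
  have q3 := abs_le.1 herr
  have q4 := abs_le.1 (hab.trans hm2)
  rw [abs_le]
  constructor <;> linarith [q1.1, q1.2, q2.1, q2.2, q3.1, q3.2, q4.1, q4.2]

theorem loglog_ge {x : ℝ} (hx : 16 ≤ x) : 2.77 ≤ Real.log x ∧ 1 ≤ Real.log (Real.log x) := by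
  have h1 : Real.log 16 = 4 * Real.log 2 := by
    rw [show (16:ℝ) = 2^4 by norm_num, Real.log_pow]; norm_num
  have h2 := Real.log_two_gt_d9
  have h3 := Real.log_le_log (by norm_num) hx
  have h4 : 2.77 ≤ Real.log x := by linarith
  refine ⟨h4, ?_⟩
  rw [Real.le_log_iff_exp_le (by linarith)]
  have := Real.exp_one_lt_d9
  linarith

theorem choose_i0 : ∃ C : ℝ, 0 < C ∧ ∀ x : ℝ, 16 ≤ x → ∀ w : ℝ, 1 ≤ w → w ≤ x →
    35 * Real.log (Real.log x) ≤ Real.log w → ∃ i0 : ℕ, 1 ≤ i0 ∧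
      1 / (i0:ℝ) ≤ 70 * (Real.log (Real.log x) / Real.log w) ∧
      Dn (2^i0) w ≤ C * (Real.log (Real.log x) / Real.log w) := by
  obtain ⟨C, hC0, hC⟩ := Dn_decay
  refine ⟨1 + 140 * C, by linarith, fun x hx w hw hwx hLw => ?_⟩
  obtain ⟨hlx, hll⟩ := loglog_ge hx
  set LL := Real.log (Real.log x) with hLL
  set L := Real.log w with hL
  have hL35 : 35 ≤ L := by linarith
  have hy1 : 1 ≤ L / (35 * LL) := by rw [le_div_iff₀ (by linarith)]; linarith
  set i0 := ⌊L / (35 * LL)⌋₊ with hi0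
  have h1 : 1 ≤ i0 := Nat.floor_pos.2 hy1
  have h1' : (1:ℝ) ≤ i0 := by exact_mod_cast h1
  have h2 : (i0:ℝ) ≤ L / (35 * LL) := Nat.floor_le (by linarith)
  have h3 : L / (35 * LL) < i0 + 1 := Nat.lt_floor_add_one _
  have h4 : L ≤ 70 * LL * i0 := by
    rw [div_lt_iff₀ (by linarith)] at h3
    nlinarith
  have h5 : 1 / (i0:ℝ) ≤ 70 * (LL / L) := by
    rw [← mul_div_assoc, div_le_div_iff₀ (by linarith) (by linarith)]; linarith
  refine ⟨i0, h1, h5, ?_⟩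
  set j := ⌈2 * LL⌉₊ with hj
  have hj1 : 2 * LL ≤ j := Nat.le_ceil _
  have hj2 : (j:ℝ) < 2 * LL + 1 := Nat.ceil_lt_add_one (by linarith)
  have hlz := log_two_pow_ge i0
  have hlz2 : Real.log ((2^i0:ℕ):ℝ) ≤ i0 := by
    push_cast
    rw [Real.log_pow]
    have := Real.log_two_lt_d9
    nlinarith
  have hz2 : 2 ≤ 2^i0 := by
    calc 2 = 2^1 := rfl
      _ ≤ 2^i0 := Nat.pow_le_pow_right (by norm_num) h1
  have hd := hC (2^i0) hz2 j w (by linarith) (by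
    rw [le_div_iff₀ (by linarith)] at h2
    calc (2 + (j:ℝ)) * (Real.log ((2^i0:ℕ):ℝ) + 6) ≤ (5 * LL) * (7 * i0) :=
          mul_le_mul (by linarith) (by linarith) (by linarith) (by linarith)
      _ ≤ L := by linarith)
  refine hd.trans ?_
  have hpow : (1/2:ℝ)^j ≤ LL / L := by
    have a1 : (1/2:ℝ)^j ≤ 1 / Real.log x := by
      rw [one_div_pow]
      refine one_div_le_one_div_of_le (by linarith) ?_
      rw [← Real.log_le_log_iff (by linarith) (by positivity), Real.log_pow]
      have := Real.log_two_gt_d9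
      nlinarith
    have a2 : 1 / Real.log x ≤ 1 / L := one_div_le_one_div_of_le (by linarith)
      (Real.log_le_log (by linarith) hwx)
    have a3 : 1 / L ≤ LL / L := by gcongr
    linarith
  have hc2 : C / (Real.log ((2^i0:ℕ):ℝ) + 6) ≤ 140 * C * (LL / L) := by
    calc C / (Real.log ((2^i0:ℕ):ℝ) + 6) ≤ 2 * C * (1 / i0) := by
          rw [mul_one_div, div_le_div_iff₀ (by linarith) (by linarith)]
          nlinarith
      _ ≤ 2 * C * (70 * (LL / L)) := by gcongr
      _ = _ := by ring
  linarith

theorem S_final (k ℓ : ℕ) (hk : 2 ≤ k) (hgcd : Nat.gcd ℓ k = 1) : ∃ C : ℝ, 0 < C ∧ ∀ x : ℝ, 16 ≤ x →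
    ∀ w : ℝ, 1 ≤ w → w ≤ x → ∀ T : ℕ,
    |∑ p ∈ range T, fe k ℓ p * Dn p (w/p)| ≤ C * Real.log (Real.log x) * (1 / (1 + Real.log w)) := by
  obtain ⟨C1, hC1, h1⟩ := S_bound k ℓ hk hgcd
  obtain ⟨C2, hC2, h2⟩ := choose_i0
  refine ⟨36 * (C1 + 1) + 2 * (70 * C1 + C2), by positivity, fun x hx w hw hwx T => ?_⟩
  obtain ⟨hlx, hll⟩ := loglog_ge hx
  have hlw : 0 ≤ Real.log w := Real.log_nonneg hw
  set LL := Real.log (Real.log x)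
  set L := Real.log w
  rw [mul_one_div]
  rcases lt_or_ge L (35 * LL) with h | h
  · have a1 := h1 T 1 le_rfl w hw
    have a2 := Dn_le (2^1) w
    have a3 : C1 + 1 ≤ (36 * (C1 + 1) + 2 * (70 * C1 + C2)) * LL / (1 + L) := by
      rw [le_div_iff₀ (by linarith)]
      have : 1 + L ≤ 36 * LL := by linarith
      nlinarith [mul_nonneg (by positivity : 0 ≤ 2 * (70 * C1 + C2)) (by linarith : 0 ≤ LL), mul_le_mul_of_nonneg_left this (by linarith : 0 ≤ C1+1)]
    simp only [Nat.cast_one, div_one] at a1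
    exact a1.trans ((add_le_add le_rfl a2).trans a3)
  · obtain ⟨i0, b1, b2, b3⟩ := h2 x hx w hw hwx h
    have a1 := h1 T i0 b1 w hw
    have hL : 0 < L := by linarith
    have a2 : C1 / i0 ≤ C1 * (70 * (LL/L)) := by
      calc C1 / i0 = C1 * (1/i0) := by ring
        _ ≤ _ := by gcongr
    have a3 : (70 * C1 + C2) * (LL / L) ≤ (36 * (C1 + 1) + 2 * (70 * C1 + C2)) * LL / (1 + L) := by
      rw [← mul_div_assoc, div_le_div_iff₀ hL (by linarith)]
      have p1 : 0 ≤ (70 * C1 + C2) * LL := by positivity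
      have p2 : 0 ≤ 36 * (C1+1) * LL * L := by positivity
      have : 1 + L ≤ 2 * L := by linarith
      nlinarith [mul_le_mul_of_nonneg_left this p1]
    linarith

theorem sum_harm (J : ℕ) : ∑ i ∈ Ico 1 (J+1), (1/(i:ℝ)) * (1/((J:ℝ)-i+1)) ≤ 2 / ((J:ℝ)+1) * (1 + Real.log J) := by
  have e1 : ∀ i ∈ Ico 1 (J+1), (1/(i:ℝ)) * (1/((J:ℝ)-i+1)) = 1/((J:ℝ)+1) * (1/(i:ℝ) + 1/((J:ℝ)-i+1)) := by
    intro i hi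
    simp only [mem_Ico] at hi
    have h1 : (1:ℝ) ≤ i := by exact_mod_cast hi.1
    have h2 : (i:ℝ) ≤ J := by exact_mod_cast (by omega : i ≤ J)
    have h3 : (J:ℝ) - i + 1 ≠ 0 := by linarith
    have h4 : (i:ℝ) ≠ 0 := by linarith
    have h5 : (J:ℝ) + 1 ≠ 0 := by linarith
    field_simp
    ring
  have hH : ∑ i ∈ Ico 1 (J+1), 1/(i:ℝ) ≤ 1 + Real.log J := by
    have := harmonic_le_one_add_log J
    rw [harmonic_eq_sum_Icc] at this
    push_cast at this
    refine le_trans (le_of_eq ?_) this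
    refine sum_congr ?_ fun i _ => by rw [one_div]
    ext; simp
  have hrefl : ∑ i ∈ Ico 1 (J+1), 1/((J:ℝ)-i+1) = ∑ i ∈ Ico 1 (J+1), 1/(i:ℝ) := by
    refine sum_bij (fun i _ => J + 1 - i) ?_ ?_ ?_ ?_
    · intro i hi; simp only [mem_Ico] at hi ⊢; omega
    · intro i hi j hj h; simp only [mem_Ico] at hi hj; omega
    · intro i hi; simp only [mem_Ico] at hi
      exact ⟨J+1-i, by simp only [mem_Ico]; omega, by omega⟩
    · intro i hi; simp only [mem_Ico] at hi
      rw [Nat.cast_sub (by omega)]; push_cast; congr 1; ring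
  rw [sum_congr rfl e1, ← mul_sum, sum_add_distrib, hrefl]
  calc _ = 2 / ((J:ℝ)+1) * ∑ i ∈ Ico 1 (J+1), 1/(i:ℝ) := by ring
    _ ≤ _ := by gcongr

theorem q_sum (x : ℝ) (hx : 16 ≤ x) :
    ∑ q ∈ Icc 1 ⌊x⌋₊, (if q.Prime then 1/(q:ℝ) * (1/(1 + Real.log (x/q))) else 0) ≤
      252 * Real.log (Real.log x) / Real.log x := by
  obtain ⟨hlx, hll⟩ := loglog_ge hx
  have hx0 : 0 < x := by linarith
  set J := Nat.log 2 ⌊x⌋₊ with hJ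
  have hfl : ⌊x⌋₊ ≠ 0 := (Nat.floor_pos.2 (by linarith)).ne'
  have hJ1 : (2:ℝ)^J ≤ x := by
    have := Nat.pow_log_le_self 2 hfl
    have : ((2^J : ℕ):ℝ) ≤ x := (Nat.le_floor_iff hx0.le).1 this
    exact_mod_cast this
  have hJn : ⌊x⌋₊ < 2^(J+1) := Nat.lt_pow_succ_log_self (by norm_num : 1 < 2) ⌊x⌋₊
  have hJ2 : x < (2:ℝ)^(J+1) := by
    have : x < ((2^(J+1) : ℕ):ℝ) := (Nat.floor_lt hx0.le).1 hJn
    exact_mod_cast this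
  have hl2a := Real.log_two_gt_d9
  have hl2b := Real.log_two_lt_d9
  have hJ3 : 0.69 * (J:ℝ) ≤ Real.log x := by
    have := Real.log_le_log (by positivity) hJ1
    rw [Real.log_pow] at this
    nlinarith [(Nat.cast_nonneg J : (0:ℝ) ≤ J)]
  have hJ4 : Real.log x ≤ J + 1 := by
    have := Real.log_le_log hx0 hJ2.le
    rw [Real.log_pow] at this
    push_cast at this
    nlinarith [(Nat.cast_nonneg J : (0:ℝ) ≤ J)]
  have hJpos : (1:ℝ) ≤ J := by
    have : 1 ≤ J := by
      by_contra h
      have : J = 0 := by omega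
      rw [this] at hJ2; norm_num at hJ2; linarith
    exact_mod_cast this
  set h : ℕ → ℝ := fun q => if q.Prime ∧ (q:ℝ) ≤ x then 1/(q:ℝ) * (1/(1 + Real.log (x/q))) else 0 with hh
  have hlog0 : ∀ q : ℕ, q.Prime → (q:ℝ) ≤ x → 0 ≤ Real.log (x/q) := by
    intro q hq hqx
    have : (0:ℝ) < q := by exact_mod_cast hq.pos
    exact Real.log_nonneg (by rw [le_div_iff₀ this]; linarith)
  have hhnn : ∀ q, 0 ≤ h q := by
    intro q; simp only [hh]; split_ifs with hq
    · have := hlog0 q hq.1 hq.2; positivity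
    · exact le_rfl
  calc _ ≤ ∑ q ∈ Ico ((2:ℕ)^1) (2^(J+1)), h q := by
        rw [← sum_filter]
        calc _ = ∑ q ∈ (Icc 1 ⌊x⌋₊).filter Nat.Prime, h q := by
              refine sum_congr rfl fun q hq => ?_
              simp only [mem_filter, mem_Icc] at hq
              simp only [hh]
              rw [if_pos ⟨hq.2, (Nat.le_floor_iff hx0.le).1 hq.1.2⟩]
          _ ≤ _ := by
              refine sum_le_sum_of_subset_of_nonneg ?_ (fun q _ _ => hhnn q)
              intro q hq
              simp only [mem_filter, mem_Icc, mem_Ico] at hq ⊢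
              exact ⟨by have := hq.2.two_le; omega, by omega⟩
    _ = ∑ i ∈ Ico 1 (J+1), ∑ q ∈ Ico ((2:ℕ)^i) (2^(i+1)), h q := sum_dyadic _ _ _ (by omega)
    _ ≤ ∑ i ∈ Ico 1 (J+1), 42 * ((1/(i:ℝ)) * (1/((J:ℝ)-i+1))) := by
        refine sum_le_sum fun i hi => ?_
        simp only [mem_Ico] at hi
        have h1 : (1:ℝ) ≤ i := by exact_mod_cast hi.1
        have h2 : (i:ℝ) ≤ J := by exact_mod_cast (by omega : i ≤ J)
        calc _ ≤ ∑ q ∈ Ico ((2:ℕ)^i) (2^(i+1)), (if q.Prime then 1/(q:ℝ) else 0) * (2/((J:ℝ)-i+1)) := by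
              refine sum_le_sum fun q hq => ?_
              simp only [mem_Ico] at hq
              simp only [hh]
              by_cases hqp : q.Prime
              · by_cases hqx : (q:ℝ) ≤ x
                · rw [if_pos ⟨hqp, hqx⟩, if_pos hqp]
                  have hl0 := hlog0 q hqp hqx
                  have hq0 : (0:ℝ) < q := by exact_mod_cast hqp.pos
                  refine mul_le_mul_of_nonneg_left ?_ (by positivity)
                  rw [div_le_div_iff₀ (by linarith) (by linarith)]
                  rcases eq_or_lt_of_le (by omega : i ≤ J) with hiJ | hiJ
                  · rw [hiJ]; linarith
                  · have hiJ' : (i:ℝ) + 1 ≤ J := by exact_mod_cast hiJ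
                    have hq2 : (q:ℝ) ≤ 2^(i+1) := by exact_mod_cast hq.2.le
                    have a1 : Real.log q ≤ (i+1) * Real.log 2 := by
                      have := Real.log_le_log hq0 hq2
                      rw [Real.log_pow] at this; push_cast at this; exact this
                    have a2 : J * Real.log 2 ≤ Real.log x := by
                      have := Real.log_le_log (by positivity) hJ1
                      rwa [Real.log_pow] at this
                    rw [Real.log_div hx0.ne' hq0.ne']
                    nlinarith [mul_le_mul_of_nonneg_right hl2a.le (by linarith : 0 ≤ (J:ℝ) - i - 1)]
                · rw [if_neg (fun h => hqx h.2), if_pos hqp]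
                  have : 0 < (J:ℝ) - i + 1 := by linarith
                  positivity
              · rw [if_neg (fun h => hqp h.1), if_neg hqp]; simp
          _ = (∑ q ∈ Ico ((2:ℕ)^i) (2^(i+1)), if q.Prime then 1/(q:ℝ) else 0) * (2/((J:ℝ)-i+1)) := by rw [sum_mul]
          _ ≤ (21 / i) * (2/((J:ℝ)-i+1)) := by
              refine mul_le_mul_of_nonneg_right (prime_block i hi.1) ?_
              have : 0 < (J:ℝ) - i + 1 := by linarith
              positivity
          _ = _ := by ring
    _ = 42 * ∑ i ∈ Ico 1 (J+1), ((1/(i:ℝ)) * (1/((J:ℝ)-i+1))) := by rw [mul_sum]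
    _ ≤ 42 * (2 / ((J:ℝ)+1) * (1 + Real.log J)) := by gcongr; exact sum_harm J
    _ ≤ 42 * (2 / Real.log x * (3 * Real.log (Real.log x))) := by
        have a1 : Real.log J ≤ 1 + Real.log (Real.log x) := by
          have b1 : (J:ℝ) ≤ 2 * Real.log x := by linarith
          have := Real.log_le_log (by linarith) b1
          rw [Real.log_mul (by norm_num) (by linarith)] at this
          linarith
        have a0 := Real.log_nonneg hJpos
        gcongr
        linarith
    _ = _ := by ring

noncomputable def Qsum (k ℓ : ℕ) (x : ℝ) : ℝ := ∑ q ∈ Icc 1 ⌊x⌋₊, if q.Prime then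
    ∑ p ∈ range q, (if p.Prime then epsRes k ℓ p * Psi p (x/q/p) else 0) else 0

theorem Qsum_bound (k ℓ : ℕ) (hk : 2 ≤ k) (hgcd : Nat.gcd ℓ k = 1) : ∃ C : ℝ, 0 < C ∧ ∀ x : ℝ, 16 ≤ x →
    |Qsum k ℓ x| ≤ C * (x * Real.log (Real.log x)^2 / Real.log x) := by
  obtain ⟨C, hC0, hC⟩ := S_final k ℓ hk hgcd
  refine ⟨252 * C, by linarith, fun x hx => ?_⟩
  obtain ⟨hlx, hll⟩ := loglog_ge hx
  have hx0 : 0 < x := by linarith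
  calc |Qsum k ℓ x| ≤ ∑ q ∈ Icc 1 ⌊x⌋₊, (x * (C * Real.log (Real.log x))) * (if q.Prime then 1/(q:ℝ) * (1/(1 + Real.log (x/q))) else 0) := by
        refine (abs_sum_le_sum_abs _ _).trans (sum_le_sum fun q hq => ?_)
        simp only [mem_Icc] at hq
        split_ifs with hqp
        · have hq0 : (0:ℝ) < q := by exact_mod_cast hqp.pos
          have hqx : (q:ℝ) ≤ x := (Nat.le_floor_iff hx0.le).1 hq.2
          have hq1 : (1:ℝ) ≤ q := by exact_mod_cast hq.1
          have e : ∑ p ∈ range q, (if p.Prime then epsRes k ℓ p * Psi p (x/q/p) else 0) =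
              (x/q) * ∑ p ∈ range q, fe k ℓ p * Dn p (x/q/p) := by
            rw [mul_sum]
            refine sum_congr rfl fun p _ => ?_
            unfold fe
            split_ifs with hp
            · have hp0 : (0:ℝ) < p := by exact_mod_cast hp.pos
              unfold Dn
              field_simp
            · simp
          rw [e, abs_mul, abs_of_nonneg (by positivity : 0 ≤ x/q)]
          have := hC x hx (x/q) (by rw [le_div_iff₀ hq0]; linarith) (div_le_self hx0.le hq1) q
          calc _ ≤ x/q * (C * Real.log (Real.log x) * (1 / (1 + Real.log (x/q)))) := by gcongr
            _ = _ := by ring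
        · simp
    _ = (x * (C * Real.log (Real.log x))) * ∑ q ∈ Icc 1 ⌊x⌋₊, (if q.Prime then 1/(q:ℝ) * (1/(1 + Real.log (x/q))) else 0) := by
        rw [mul_sum]
    _ ≤ (x * (C * Real.log (Real.log x))) * (252 * Real.log (Real.log x) / Real.log x) := by
        refine mul_le_mul_of_nonneg_left (q_sum x hx) ?_
        have : 0 ≤ Real.log (Real.log x) := by linarith
        positivity
    _ = _ := by ring

theorem slpf_spec (n : ℕ) (h : 2 ≤ n.primeFactors.card) : ∃ q p : ℕ, q ∈ n.primeFactors ∧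
    p ∈ n.primeFactors ∧ p < q ∧ (∀ r ∈ n.primeFactors, r = q ∨ r ≤ p) ∧ secondLargestPrimeFac n = p := by
  have hlen : 2 ≤ ((n.primeFactors.sort (· ≤ ·)).reverse).length := by simpa using h
  have hpw : ((n.primeFactors.sort (· ≤ ·)).reverse).Pairwise (fun a b => b ≤ a) := by
    rw [List.pairwise_reverse]; exact Finset.pairwise_sort _ _
  have hnd : ((n.primeFactors.sort (· ≤ ·)).reverse).Nodup := by
    rw [List.nodup_reverse]; exact Finset.sort_nodup _ _
  have hmem : ∀ r, r ∈ (n.primeFactors.sort (· ≤ ·)).reverse ↔ r ∈ n.primeFactors := by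
    intro r; rw [List.mem_reverse, Finset.mem_sort]
  unfold secondLargestPrimeFac
  generalize (n.primeFactors.sort (· ≤ ·)).reverse = l at *
  match l, hlen with
  | q :: p :: l, _ =>
    refine ⟨q, p, (hmem q).1 (by simp), (hmem p).1 (by simp), ?_, ?_, by simp⟩
    · simp only [List.pairwise_cons, List.nodup_cons, List.mem_cons] at hpw hnd
      have h1 := hpw.1 p (Or.inl rfl)
      have h2 : q ≠ p := fun h => hnd.1 (Or.inl h)
      omega
    · intro r hr
      rw [← hmem] at hr
      simp only [List.pairwise_cons, List.mem_cons] at hpw hr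
      rcases hr with h | h | h
      · exact Or.inl h
      · exact Or.inr h.le
      · exact Or.inr (hpw.2.1 r h)

def BadN (n : ℕ) : Prop := ∃ q : ℕ, q.Prime ∧ q^2 ∣ n ∧ Smooth q n

open Classical in
noncomputable def badi (n : ℕ) : ℝ := if BadN n then 1 else 0

theorem badi_nonneg (n : ℕ) : 0 ≤ badi n := by unfold badi; split_ifs <;> norm_num

theorem uniq_aux {n q p : ℕ} (hq : q.Prime) (hp : p.Prime) (hd : q * p ∣ n)
    (hs : Smooth p (n / (q*p))) : ∀ r : ℕ, r.Prime → r ∣ n → r = q ∨ r ≤ p := by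
  intro r hr hrn
  rw [← Nat.div_mul_cancel hd] at hrn
  rcases (Nat.Prime.dvd_mul hr).1 hrn with h | h
  · exact Or.inr (hs r hr h)
  · rcases (Nat.Prime.dvd_mul hr).1 h with h | h
    · exact Or.inl ((Nat.prime_dvd_prime_iff_eq hr hq).1 h)
    · exact Or.inr ((Nat.prime_dvd_prime_iff_eq hr hp).1 h).le

noncomputable def gP (k ℓ n : ℕ) : ℝ := if 2 ≤ n.primeFactors.card then epsRes k ℓ (secondLargestPrimeFac n) else 0

noncomputable def tm (k ℓ n q p : ℕ) : ℝ :=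
  if p.Prime then epsRes k ℓ p * (if q * p ∣ n then smi p (n/(q*p)) else 0) else 0

noncomputable def Gn (k ℓ N n : ℕ) : ℝ := ∑ q ∈ Icc 1 N, if q.Prime then ∑ p ∈ range q, tm k ℓ n q p else 0

theorem tm_ne {k ℓ n q p : ℕ} (h : tm k ℓ n q p ≠ 0) : p.Prime ∧ q * p ∣ n ∧ Smooth p (n/(q*p)) := by
  unfold tm at h
  by_cases h1 : p.Prime
  · by_cases h2 : q * p ∣ n
    · rw [if_pos h1, if_pos h2] at h
      exact ⟨h1, h2, smi_ne_zero (right_ne_zero_of_mul h)⟩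
    · simp [h2] at h
  · simp [h1] at h

theorem pt_bound (k ℓ : ℕ) (hk : 2 ≤ k) (N n : ℕ) (hn : n ∈ Icc 1 N) : |gP k ℓ n - Gn k ℓ N n| ≤ badi n := by
  simp only [mem_Icc] at hn
  have hn0 : n ≠ 0 := by omega
  by_cases h : 2 ≤ n.primeFactors.card
  · obtain ⟨q, p, hq, hp, hpq, hr, hs⟩ := slpf_spec n h
    have hqP := Nat.prime_of_mem_primeFactors hq
    have hpP := Nat.prime_of_mem_primeFactors hp
    have hqn := Nat.dvd_of_mem_primeFactors hq
    have hpn := Nat.dvd_of_mem_primeFactors hp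
    have huniq : ∀ q' p', q'.Prime → p' < q' → tm k ℓ n q' p' ≠ 0 → q' = q ∧ p' = p := by
      intro q' p' hq' hlt hne
      obtain ⟨a1, a2, a3⟩ := tm_ne hne
      have a4 := uniq_aux hq' a1 a2 a3
      have b1 := a4 q hqP hqn
      have b2 := a4 p hpP hpn
      have b3 := hr q' (by rw [Nat.mem_primeFactors]; exact ⟨hq', (dvd_mul_right _ _).trans a2, hn0⟩)
      have b4 := hr p' (by rw [Nat.mem_primeFactors]; exact ⟨a1, (dvd_mul_left _ _).trans a2, hn0⟩)
      omega
    have hG : Gn k ℓ N n = tm k ℓ n q p := by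
      unfold Gn
      rw [sum_eq_single q, if_pos hqP, sum_eq_single p]
      · intro p' hp' hne
        by_contra hc
        exact hne (huniq q p' hqP (mem_range.1 hp') hc).2
      · intro h; exact absurd (mem_range.2 hpq) h
      · intro q' _ hne
        split_ifs with hq'
        · refine sum_eq_zero fun p' hp' => ?_
          by_contra hc
          exact hne (huniq q' p' hq' (mem_range.1 hp') hc).1
        · rfl
      · intro h
        exfalso; apply h
        rw [mem_Icc]
        exact ⟨hqP.pos, (Nat.le_of_dvd (by omega) hqn).trans hn.2⟩
    have hdv : q * p ∣ n := Nat.Coprime.mul_dvd_of_dvd_of_dvd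
      ((Nat.coprime_primes hqP hpP).2 (by omega)) hqn hpn
    rw [hG]
    unfold gP tm
    rw [if_pos h, hs, if_pos hpP, if_pos hdv]
    by_cases hsm : Smooth p (n/(q*p))
    · have : smi p (n/(q*p)) = 1 := by unfold smi; rw [if_pos hsm]
      rw [this]; simpa using badi_nonneg n
    · have e : smi p (n/(q*p)) = 0 := by unfold smi; rw [if_neg hsm]
      have hbad : BadN n := by
        unfold Smooth at hsm
        push Not at hsm
        obtain ⟨r, hrP, hrd, hrp⟩ := hsm
        have hrn : r ∣ n := hrd.trans (Nat.div_dvd_of_dvd hdv)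
        have hrq : r = q := by
          rcases hr r (by rw [Nat.mem_primeFactors]; exact ⟨hrP, hrn, hn0⟩) with h | h
          · exact h
          · omega
        subst hrq
        refine ⟨r, hrP, ?_, ?_⟩
        · have := Nat.mul_dvd_of_dvd_div hdv hrd
          rw [pow_two]
          refine dvd_trans ⟨p, ?_⟩ this
          ring
        · intro s hsP hsn
          rcases hr s (by rw [Nat.mem_primeFactors]; exact ⟨hsP, hsn, hn0⟩) with h | h <;> omega
      have : badi n = 1 := by unfold badi; rw [if_pos hbad]
      rw [e, this]; simpa using eps_abs k ℓ p hk
  · have hG : Gn k ℓ N n = 0 := by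
      unfold Gn
      refine sum_eq_zero fun q _ => ?_
      split_ifs with hq
      · refine sum_eq_zero fun p hp => ?_
        by_contra hc
        obtain ⟨a1, a2, a3⟩ := tm_ne hc
        apply h
        have hlt := mem_range.1 hp
        rw [← card_pair (show p ≠ q by omega)]
        refine card_le_card ?_
        intro r hr
        simp only [mem_insert, mem_singleton] at hr
        rw [Nat.mem_primeFactors]
        rcases hr with rfl | rfl
        · exact ⟨a1, (dvd_mul_left _ _).trans a2, hn0⟩
        · exact ⟨hq, (dvd_mul_right _ _).trans a2, hn0⟩
      · rfl
    rw [hG]; unfold gP; rw [if_neg h]; simpa using badi_nonneg n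

theorem Qsum_eq (k ℓ : ℕ) (x : ℝ) : Qsum k ℓ x = ∑ n ∈ Icc 1 ⌊x⌋₊, Gn k ℓ ⌊x⌋₊ n := by
  unfold Qsum Gn
  rw [sum_comm]
  refine sum_congr rfl fun q _ => ?_
  split_ifs with hq
  · rw [sum_comm]
    refine sum_congr rfl fun p _ => ?_
    unfold tm
    split_ifs with hp
    · rw [← mul_sum, ← sum_mult (q*p) _ (Nat.mul_pos hq.pos hp.pos) (fun m => smi p m)]
      unfold Psi
      rw [div_div, ← Nat.cast_mul, Nat.floor_div_natCast]
    · simp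
  · simp

theorem bad_le (x : ℝ) (hx : 1 ≤ x) (i0 : ℕ) (hi0 : 1 ≤ i0) :
    ∑ n ∈ Icc 1 ⌊x⌋₊, badi n ≤ x * (Dn (2^i0) x + 2 * (1 / (i0:ℝ))) := by
  have hx0 : 0 < x := by linarith
  have hi' : (1:ℝ) ≤ i0 := by exact_mod_cast hi0
  have h2i : (i0:ℝ) ≤ ((2^i0:ℕ):ℝ) := by exact_mod_cast Nat.lt_two_pow_self.le
  have h2n : 1 ≤ 2^i0 := Nat.one_le_two_pow
  calc _ ≤ ∑ n ∈ Icc 1 ⌊x⌋₊, (smi (2^i0) n + ∑ d ∈ Ico ((2:ℕ)^i0) (2^i0 + ⌊x⌋₊ + 1), if d^2 ∣ n then (1:ℝ) else 0) := by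
        refine sum_le_sum fun n hn => ?_
        simp only [mem_Icc] at hn
        have hnn : ∀ d ∈ Ico ((2:ℕ)^i0) (2^i0 + ⌊x⌋₊ + 1), (0:ℝ) ≤ if d^2 ∣ n then 1 else 0 := by
          intro d _; split_ifs <;> norm_num
        have hsn := sum_nonneg hnn
        have hsm := smi_nonneg (2^i0) n
        unfold badi
        split_ifs with hb
        · obtain ⟨q, hq, hqn, hs⟩ := hb
          rcases le_or_gt q (2^i0) with h | h
          · have : smi (2^i0) n = 1 := by
              unfold smi; rw [if_pos]
              exact fun r hr hd => (hs r hr hd).trans h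
            linarith
          · have hqx : q ≤ ⌊x⌋₊ := by
              have h1 := Nat.le_of_dvd (by omega) hqn
              have h2 : q ≤ q^2 := by rw [pow_two]; exact Nat.le_mul_self q
              omega
            have := single_le_sum hnn (by rw [mem_Ico]; omega : q ∈ Ico ((2:ℕ)^i0) (2^i0 + ⌊x⌋₊ + 1))
            rw [if_pos hqn] at this
            linarith
        · linarith
    _ = Psi (2^i0) x + ∑ d ∈ Ico ((2:ℕ)^i0) (2^i0 + ⌊x⌋₊ + 1), ∑ n ∈ Icc 1 ⌊x⌋₊, if d^2 ∣ n then (1:ℝ) else 0 := by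
        rw [sum_add_distrib, sum_comm (s := Icc 1 ⌊x⌋₊)]; rfl
    _ ≤ Psi (2^i0) x + ∑ d ∈ Ico ((2:ℕ)^i0) (2^i0 + ⌊x⌋₊ + 1), x * (1 / (d:ℝ)^2) := by
        refine add_le_add le_rfl (sum_le_sum fun d hd => ?_)
        simp only [mem_Ico] at hd
        rw [← sum_mult (d^2) ⌊x⌋₊ (by have : 0 < d := by omega
                                      positivity) (fun _ => 1)]
        simp only [sum_const, Nat.card_Icc, nsmul_eq_mul, mul_one, Nat.add_sub_cancel]
        rw [← Nat.floor_div_natCast, mul_one_div]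
        push_cast
        exact Nat.floor_le (by positivity)
    _ ≤ Psi (2^i0) x + x * (2 * (1/(i0:ℝ))) := by
        rw [← mul_sum]
        gcongr
        refine (sum_inv_sq _ _ h2n (by omega)).trans ?_
        have h1 : (0:ℝ) ≤ 2 / ((2^i0 + ⌊x⌋₊ + 1 : ℕ):ℝ) := by positivity
        have h2 : 2 / ((2^i0:ℕ):ℝ) ≤ 2 * (1 / i0) := by
          rw [mul_one_div]; gcongr
        linarith
    _ = _ := by unfold Dn; field_simp

theorem bad_bound : ∃ C : ℝ, 0 < C ∧ ∀ x : ℝ, 16 ≤ x →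
    ∑ n ∈ Icc 1 ⌊x⌋₊, badi n ≤ C * (x * Real.log (Real.log x) / Real.log x) := by
  obtain ⟨C, hC0, hC⟩ := choose_i0
  refine ⟨35 + C + 140, by linarith, fun x hx => ?_⟩
  obtain ⟨hlx, hll⟩ := loglog_ge hx
  have hx0 : 0 < x := by linarith
  have hT : 0 ≤ x * Real.log (Real.log x) / Real.log x := by
    have : 0 ≤ Real.log (Real.log x) := by linarith
    have : 0 ≤ Real.log x := by linarith
    positivity
  rcases lt_or_ge (Real.log x) (35 * Real.log (Real.log x)) with h | h
  · have h1 : ∑ n ∈ Icc 1 ⌊x⌋₊, badi n ≤ x := by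
      calc _ ≤ ∑ n ∈ Icc 1 ⌊x⌋₊, (1:ℝ) := sum_le_sum fun n _ => by unfold badi; split_ifs <;> norm_num
        _ = ⌊x⌋₊ := by simp
        _ ≤ x := Nat.floor_le hx0.le
    have h2 : x ≤ 35 * (x * Real.log (Real.log x) / Real.log x) := by
      rw [← mul_div_assoc, le_div_iff₀ (by linarith)]; nlinarith
    nlinarith
  · obtain ⟨i0, h1, h2, h3⟩ := hC x hx x (by linarith) le_rfl h
    refine (bad_le x (by linarith) i0 h1).trans ?_
    calc _ ≤ x * (C * (Real.log (Real.log x) / Real.log x) + 2 * (70 * (Real.log (Real.log x) / Real.log x))) := by gcongr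
      _ = (C + 140) * (x * Real.log (Real.log x) / Real.log x) := by ring
      _ ≤ _ := by nlinarith

theorem pi_bound (x : ℝ) (hx : 16 ≤ x) :
    (((Icc 1 ⌊x⌋₊).filter Nat.Prime).card : ℝ) ≤ 5 * (x / Real.log x) := by
  obtain ⟨hlx, hll⟩ := loglog_ge hx
  have hx0 : 0 < x := by linarith
  have h1 := Chebyshev.pi_le_log4_mul_div (by linarith : 1 < x)
  have e : ((Icc 1 ⌊x⌋₊).filter Nat.Prime).card = Nat.primeCounting ⌊x⌋₊ := by
    rw [← Nat.primesLE_card_eq_primeCounting]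
    congr 1
    ext p
    simp only [mem_filter, mem_Icc, Nat.mem_primesLE]
    exact ⟨fun h => ⟨h.1.2, h.2⟩, fun h => ⟨⟨h.2.pos, h.1⟩, h.2⟩⟩
  rw [e]
  refine h1.trans ?_
  rw [Real.log_sqrt hx0.le]
  have h4 : Real.log 4 ≤ 1.4 := by
    rw [show (4:ℝ) = 2^2 by norm_num, Real.log_pow]
    have := Real.log_two_lt_d9
    push_cast; linarith
  have h5 : √x ≤ 2 * (x / Real.log x) := by
    rw [← mul_div_assoc, le_div_iff₀ (by linarith)]
    have a1 := Real.log_sqrt hx0.le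
    have a2 := Real.log_le_sub_one_of_pos (Real.sqrt_pos.2 hx0)
    have a3 := Real.mul_self_sqrt hx0.le
    nlinarith [Real.sqrt_pos.2 hx0]
  have h6 : Real.log 4 * x / (Real.log x / 2) = 2 * Real.log 4 * (x / Real.log x) := by
    field_simp
  have h7 : 0 ≤ x / Real.log x := by
    have : 0 ≤ Real.log x := by linarith
    positivity
  rw [h6]
  nlinarith

theorem omega_small (x : ℝ) (n : ℕ) (hn : n ∈ Icc 1 ⌊x⌋₊) (h : ¬ 2 ≤ n.primeFactors.card) :
    (1:ℝ) ≤ (if n = 1 then 1 else 0) + (if n.Prime then 1 else 0) + badi n := by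
  simp only [mem_Icc] at hn
  have hb := badi_nonneg n
  by_cases h1 : n = 1
  · rw [if_pos h1]; split_ifs <;> linarith
  by_cases h2 : n.Prime
  · rw [if_neg h1, if_pos h2]; linarith
  have hc : n.primeFactors.card = 1 := by
    have : n.primeFactors.card ≠ 0 := by
      rw [Finset.card_ne_zero]
      exact Nat.nonempty_primeFactors.2 (by omega)
    omega
  rw [← isPrimePow_iff_card_primeFactors_eq_one, isPrimePow_nat_iff] at hc
  obtain ⟨p, m, hp, hm, rfl⟩ := hc
  have hm2 : 2 ≤ m := by
    rcases Nat.lt_or_ge m 2 with h | h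
    · have : m = 1 := by omega
      subst this; simp at h2; exact absurd hp h2
    · exact h
  have : BadN (p^m) := ⟨p, hp, pow_dvd_pow p hm2, fun r hr hd =>
    ((Nat.prime_dvd_prime_iff_eq hr hp).1 (hr.dvd_of_dvd_pow hd)).le⟩
  have : badi (p^m) = 1 := by unfold badi; rw [if_pos this]
  rw [if_neg h1, if_neg h2]; linarith

/-- Uniform distribution of `P₂(n)` in the reduced residue classes mod `k`:
for fixed `k ≥ 2` and `1 ≤ ℓ < k` with `gcd(ℓ,k) = 1`, there is `C > 0` with
`|#{n ≤ x : ω(n) ≥ 2, P₂(n) ≡ ℓ (mod k)} − x/φ(k)| ≤ C x (log log x)² / log x`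
for all `x ≥ 16`. -/
theorem second_largest_prime_factor_uniform_distribution
    (k ℓ : ℕ) (hk : 2 ≤ k) (hl : 1 ≤ ℓ) (hlk : ℓ < k) (hgcd : Nat.gcd ℓ k = 1) :
    ∃ C > (0 : ℝ), ∀ x : ℝ, 16 ≤ x →
      |(((Finset.Icc 1 ⌊x⌋₊).filter
            (fun n => 2 ≤ n.primeFactors.card ∧ secondLargestPrimeFac n ≡ ℓ [MOD k])).card : ℝ)
          - x / (Nat.totient k : ℝ)|
        ≤ C * x * (Real.log (Real.log x)) ^ 2 / Real.log x := by
  obtain ⟨C1, hC1, h1⟩ := Qsum_bound k ℓ hk hgcd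
  obtain ⟨C2, hC2, h2⟩ := bad_bound
  refine ⟨C1 + 2 * C2 + 7, by linarith, fun x hx => ?_⟩
  obtain ⟨hlx, hll⟩ := loglog_ge hx
  have hx0 : 0 < x := by linarith
  have b1 := h1 x hx
  have b2 := h2 x hx
  have b3 := pi_bound x hx
  set N := ⌊x⌋₊ with hN
  have hNx : (N:ℝ) ≤ x := Nat.floor_le hx0.le
  have hNx2 : x < N + 1 := Nat.lt_floor_add_one x
  set LL := Real.log (Real.log x)
  set L := Real.log x
  set φ := (Nat.totient k : ℝ) with hφ
  have hφ1 : 1 ≤ φ := by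
    have : 1 ≤ Nat.totient k := Nat.totient_pos.2 (by omega)
    rw [hφ]; exact_mod_cast this
  set bd := ∑ n ∈ Icc 1 N, badi n
  set sm : ℝ := ∑ n ∈ Icc 1 N, (if 2 ≤ n.primeFactors.card then 0 else 1) with hsm
  have hcount : (((Finset.Icc 1 N).filter
      (fun n => 2 ≤ n.primeFactors.card ∧ secondLargestPrimeFac n ≡ ℓ [MOD k])).card : ℝ) =
      ∑ n ∈ Icc 1 N, gP k ℓ n + (N - sm) / φ := by
    have e1 : (N:ℝ) - sm = ∑ n ∈ Icc 1 N, (if 2 ≤ n.primeFactors.card then 1 else 0 : ℝ) := by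
      have : (N:ℝ) = ∑ n ∈ Icc 1 N, (1:ℝ) := by simp
      rw [this, hsm, ← sum_sub_distrib]
      refine sum_congr rfl fun n _ => ?_
      split_ifs <;> simp
    rw [e1, card_filter, sum_div, ← sum_add_distrib]
    push_cast
    refine sum_congr rfl fun n _ => ?_
    unfold gP epsRes
    by_cases h : 2 ≤ n.primeFactors.card
    · by_cases h' : secondLargestPrimeFac n ≡ ℓ [MOD k] <;> simp [h, h', hφ]
    · simp [h]
  have hgQ : |∑ n ∈ Icc 1 N, gP k ℓ n - Qsum k ℓ x| ≤ bd := by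
    rw [Qsum_eq, ← sum_sub_distrib]
    exact (abs_sum_le_sum_abs _ _).trans (sum_le_sum fun n hn => pt_bound k ℓ hk N n hn)
  have hsm0 : 0 ≤ sm := sum_nonneg fun n _ => by split_ifs <;> norm_num
  have hsm1 : sm ≤ 1 + 5 * (x / L) + bd := by
    calc sm ≤ ∑ n ∈ Icc 1 N, ((if n = 1 then 1 else 0) + (if n.Prime then 1 else 0) + badi n) := by
          refine sum_le_sum fun n hn => ?_
          by_cases h : 2 ≤ n.primeFactors.card
          · rw [if_pos h]
            have := badi_nonneg n
            split_ifs <;> linarith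
          · rw [if_neg h]; exact omega_small x n hn h
      _ ≤ 1 + 5 * (x / L) + bd := by
          rw [sum_add_distrib, sum_add_distrib]
          refine add_le_add (add_le_add ?_ ?_) le_rfl
          · rw [sum_ite_eq']; split_ifs <;> norm_num
          · refine le_trans (le_of_eq ?_) b3
            rw [card_filter]; push_cast; rfl
  rw [hcount]
  have hd1 : |(N - sm)/φ - x/φ| ≤ 1 + sm := by
    rw [← sub_div, abs_div, abs_of_pos (by linarith : 0 < φ)]
    refine (div_le_self (abs_nonneg _) hφ1).trans ?_
    rw [abs_le]; constructor <;> linarith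
  set X := x * LL^2 / L with hX
  have hL0 : 0 < L := by linarith
  have hLx : L ≤ x := by
    have := Real.log_le_sub_one_of_pos hx0
    linarith
  have hLL2 : 1 ≤ LL^2 := by nlinarith
  have c1 : x / L ≤ X := by rw [hX]; gcongr; nlinarith
  have c2 : 1 ≤ x / L := by rw [le_div_iff₀ hL0]; linarith
  have c3 : x * LL / L ≤ X := by rw [hX]; gcongr; nlinarith
  have c4 : bd ≤ C2 * X := b2.trans (by gcongr)
  have efin : (C1 + 2 * C2 + 7) * x * LL^2 / L = C1 * X + 2 * (C2 * X) + 7 * X := by rw [hX]; ring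
  rw [efin]
  have q1 := abs_le.1 b1
  have q2 := abs_le.1 hgQ
  have q3 := abs_le.1 hd1
  rw [abs_le]
  constructor <;> linarith [q1.1, q1.2, q2.1, q2.2, q3.1, q3.2]
end
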